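/- Let 𝒢 be a finite graph of groups over a finite connected graph Λ with at least one edge, in which every edge group G_e is finitely generated. If for every directed edge e of Λ the vertex group G_{t(e)} corresponding to the terminal vertex t(e) of e is stackable respecting the subgroup η_e(G_e), then the fundamental group π₁(𝒢) is stackable. -/

import Mathlib

/-!
Fix right transversals of the edge subgroups in the vertex groups. An element of the fundamental
group is represented by a reduced edge path that starts at a base vertex and carries an element of
the vertex group after every edge, a coset representative for all but the first one. For each
terminal vertex there is exactly one such normal form (`GraphData.exists_valid`,
`GraphData.Valid.eq_of_val_eq`). Uniqueness is van der Waerden's argument: the fundamental group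
acts on the normal forms (`GraphData.exists_action`), where vertex groups act by multiplication at
the end of the path, edges by appending or cancelling an edge, and normal forms with different
terminal vertices are compared by transport along the spanning tree. It is convenient to let every
path begin with a fictitious edge into the base vertex that carries the trivial group.

Every edge comes with its own stackable structure for the vertex group at its end, respecting the
edge subgroup. The alphabet of the fundamental group is the disjoint union of these alphabets and of
the edges outside the spanning tree. The word of a normal form is the concatenation of the words in
the languages `NTr` for the coset representatives, separated by the edges outside the spanning tree;
it does not change under transport along the tree, so it depends on the group element only. To
rewrite a letter `a` of the edge `f` at a group element, take the normal form that ends at the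
terminal vertex of `f` (`GraphData.Letters.PhiRel`):

* if its last edge is not `f`, write `a` in the alphabet of the last edge;
* if its last edge is `f` and the last group element `r` is not trivial or `a` is not a letter of the
  edge subgroup, use the stacking function of the vertex group at the word for `r`;
* otherwise write `a` as `bar f`, a word in the alphabet of the preceding edge, and `f`.

Edge letters always extend or cancel. Termination is a double induction. In the third case the
number of edges drops after `bar f`. In the second case the number of edges stays the same; by
translation invariance the stacking function may be evaluated at any normal form of the vertex group
in the coset of `r`, so the rewriting follows the well-founded rewriting of the vertex group
(`GraphData.Letters.acc_same`). The first case leads to the other two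
(`GraphData.Letters.acc_vertex`).
-/

/-- Evaluation of a word over an alphabet `α` in a monoid `G` via a letter map `π`. -/
def wordVal {G : Type} [Monoid G] {α : Type} (π : α → G) (w : List α) : G :=
  (w.map π).prod

/-- A language is prefix-closed if it contains every prefix of each of its words. -/
def PrefixClosed {α : Type} (N : Set (List α)) : Prop :=
  ∀ w ∈ N, ∀ p : List α, p <+: w → p ∈ N

/-- `(α, π, inv)` is a finite inverse-closed generating set for the group `G`:
no letter represents the identity, `inv` is an involution with `π (inv a) = (π a)⁻¹`,
and the letters generate `G`. -/
structure IsInvGenSet (G : Type) [Group G] {α : Type} (π : α → G) (inv : α → α) : Prop where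
  ne_one : ∀ a, π a ≠ 1
  inv_invol : ∀ a, inv (inv a) = a
  val_inv : ∀ a, π (inv a) = (π a)⁻¹
  gen : Subgroup.closure (Set.range π) = ⊤

/-- A language over `α` is regular if it is accepted by a finite state automaton. -/
def IsRegularLang {α : Type} (L : Set (List α)) : Prop :=
  ∃ (σ : Type) (_ : Fintype σ) (M : DFA α σ), M.accepts = L

/-- The padded word over `(α ∪ {$})²` corresponding to a pair of words;
`none` plays the role of the padding symbol `$`. -/
def padWord2 {α : Type} (p : List α × List α) : List (Option α × Option α) :=
  (List.range (max p.1.length p.2.length)).map (fun i => (p.1[i]?, p.2[i]?))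

/-- Synchronous regularity of a set of pairs of words. -/
def SyncRegular2 {α : Type} (L : Set (List α × List α)) : Prop :=
  IsRegularLang (padWord2 '' L)

/-- The padded word over `(α ∪ {$})³` corresponding to a triple of words. -/
def padWord3 {α : Type} (p : List α × List α × List α) :
    List (Option α × Option α × Option α) :=
  (List.range (max p.1.length (max p.2.1.length p.2.2.length))).map
    (fun i => (p.1[i]?, p.2.1[i]?, p.2.2[i]?))

/-- Synchronous regularity of a set of triples of words. -/
def SyncRegular3 {α : Type} (L : Set (List α × List α × List α)) : Prop :=
  IsRegularLang (padWord3 '' L)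

structure StackingData (α : Type) where
  N : Set (List α)
  K : ℕ
  phi : List α → α → List α

/-- `st` is a stackable structure for `G` over the finite inverse-closed generating
set `(α, π, inv)`. -/
structure IsStacking (G : Type) [Group G] {α : Type} (π : α → G) (inv : α → α)
    (st : StackingData α) : Prop where
  gen : IsInvGenSet G π inv
  nf : ∀ g : G, ∃! w, w ∈ st.N ∧ wordVal π w = g
  prefixClosed : PrefixClosed st.N
  F1 : ∀ y ∈ st.N, ∀ a : α, wordVal π (st.phi y a) = π a ∧ (st.phi y a).length ≤ st.K
  F2 : ∀ y ∈ st.N, ∀ a : α, (y ++ [a] ∈ st.N ∨ ∃ y', y = y' ++ [inv a]) → st.phi y a = [a]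
  F3 : ¬ ∃ seq : ℕ → List α × α,
      ∀ i : ℕ, (seq i).1 ∈ st.N ∧ (seq i).1 ++ [(seq i).2] ∉ st.N ∧
        (¬ ∃ y', (seq i).1 = y' ++ [inv (seq i).2]) ∧
        ∃ u u' : List α, st.phi (seq i).1 (seq i).2 = u ++ (seq (i+1)).2 :: u' ∧
          (seq (i+1)).1 ∈ st.N ∧
          wordVal π ((seq (i+1)).1) = wordVal π ((seq i).1 ++ u)

/-- The regularity conditions making a stackable structure autostackable:
the set of normal forms is regular and the graph of the stacking function is
synchronously regular. -/
def StackingData.IsAuto {α : Type} (st : StackingData α) : Prop :=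
  IsRegularLang st.N ∧
  SyncRegular3 {t : List α × List α × List α | ∃ y ∈ st.N, ∃ a : α, t = (y, [a], st.phi y a)}

/-- The stacking structure `st` respects the subgroup `H`. -/
def RespectsSubgroup {G : Type} [Group G] {α : Type} (π : α → G) (inv : α → α)
    (st : StackingData α) (H : Subgroup G) : Prop :=
  ∃ B : Set α,
    (∀ b ∈ B, inv b ∈ B) ∧
    (∀ b ∈ B, π b ∈ H) ∧
    Subgroup.closure (π '' B) = H ∧
    ∃ NH NTr : Set (List α),
      (∀ w ∈ NH, ∀ b ∈ w, b ∈ B) ∧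
      PrefixClosed NH ∧
      (∀ h : G, h ∈ H → ∃! w, w ∈ NH ∧ wordVal π w = h) ∧
      PrefixClosed NTr ∧
      (∀ g : G, ∃! w, w ∈ NTr ∧ wordVal π w * g⁻¹ ∈ H) ∧
      st.N = {w | ∃ u ∈ NH, ∃ v ∈ NTr, w = u ++ v} ∧
      (∀ y ∈ st.N, wordVal π y ∈ H → ∀ b ∈ B, ∀ c ∈ st.phi y b, c ∈ B) ∧
      (∀ a : α, ∀ y ∈ st.N, ∀ y' ∈ st.N,
        ¬(wordVal π y ∈ H ∧ a ∈ B) →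
        (∃ h ∈ H, wordVal π y' = h * wordVal π y) → st.phi y' a = st.phi y a)

/-- A group is autostackable if it admits an autostackable structure over some
finite inverse-closed generating set. -/
def Autostackable (G : Type) [Group G] : Prop :=
  ∃ (α : Type) (_ : Fintype α) (π : α → G) (inv : α → α) (st : StackingData α),
    IsStacking G π inv st ∧ st.IsAuto

/-- A group is stackable if it admits a stackable structure over some
finite inverse-closed generating set. -/
def Stackable (G : Type) [Group G] : Prop :=
  ∃ (α : Type) (_ : Fintype α) (π : α → G) (inv : α → α) (st : StackingData α),
    IsStacking G π inv st

/-- `G` is autostackable respecting the subgroup `H`. -/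
def AutostackableRespecting (G : Type) [Group G] (H : Subgroup G) : Prop :=
  ∃ (α : Type) (_ : Fintype α) (π : α → G) (inv : α → α) (st : StackingData α),
    IsStacking G π inv st ∧ st.IsAuto ∧ RespectsSubgroup π inv st H

/-- `G` is stackable respecting the subgroup `H`. -/
def StackableRespecting (G : Type) [Group G] (H : Subgroup G) : Prop :=
  ∃ (α : Type) (_ : Fintype α) (π : α → G) (inv : α → α) (st : StackingData α),
    IsStacking G π inv st ∧ RespectsSubgroup π inv st H

/-- `IsEdgePath ι τ u p v` asserts that the list of directed edges `p` is an edge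
path from the vertex `u` to the vertex `v`, where `ι` and `τ` give the initial and
terminal vertices of a directed edge. -/
def IsEdgePath {V E : Type} (ι τ : E → V) : V → List E → V → Prop
  | u, [], v => u = v
  | u, e :: p, v => ι e = u ∧ IsEdgePath ι τ (τ e) p v

section GraphOfGroups

variable {V E : Type} (bar : E → E) (t : E → V)
  (Gv : V → Type) [instGv : ∀ v, Group (Gv v)]
  (Ge : E → Type) [instGe : ∀ e, Group (Ge e)]
  (T : Set E)

/-- The group `(∗_{v ∈ V} G_v) ∗ F(E₁)`, where `E₁` is the set of directed edges
not in the spanning tree `T`. -/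
def GoGBase : Type :=
  Monoid.Coprod (Monoid.CoprodI Gv) (FreeGroup {e : E // e ∉ T})

instance : Group (GoGBase Gv T) :=
  inferInstanceAs (Group (Monoid.Coprod (Monoid.CoprodI Gv) (FreeGroup {e : E // e ∉ T})))

/-- The canonical map of a vertex group into `GoGBase`. -/
def gogVin (v : V) : Gv v →* GoGBase Gv T :=
  Monoid.Coprod.inl.comp Monoid.CoprodI.of

/-- The generator of `GoGBase` corresponding to an edge outside the spanning tree. -/
def gogEin (e : {e : E // e ∉ T}) : GoGBase Gv T :=
  Monoid.Coprod.inr (FreeGroup.of e)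

variable (η : ∀ e, Ge e →* Gv (t e)) (hGe : ∀ e, Ge (bar e) = Ge e)

/-- The relators defining the fundamental group of the graph of groups:
`ē = e⁻¹` for edges outside the tree, `η_e(g) = η_{ē}(g)` for tree edges, and
`e·η_e(g)·e⁻¹ = η_{ē}(g)` for non-tree edges. -/
def gogRels : Set (GoGBase Gv T) :=
  {x | ∃ (e : E) (he : e ∉ T) (hbe : bar e ∉ T),
      x = gogEin Gv T ⟨bar e, hbe⟩ * gogEin Gv T ⟨e, he⟩} ∪
  {x | ∃ e ∈ T, ∃ g : Ge e,
      x = gogVin Gv T (t e) (η e g) *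
        (gogVin Gv T (t (bar e)) (η (bar e) (cast (hGe e).symm g)))⁻¹} ∪
  {x | ∃ (e : E) (he : e ∉ T) (g : Ge e),
      x = gogEin Gv T ⟨e, he⟩ * gogVin Gv T (t e) (η e g) * (gogEin Gv T ⟨e, he⟩)⁻¹ *
        (gogVin Gv T (t (bar e)) (η (bar e) (cast (hGe e).symm g)))⁻¹}

/-- The fundamental group of the graph of groups (with respect to the chosen
spanning tree `T`). -/
def GoGFund : Type :=
  GoGBase Gv T ⧸ Subgroup.normalClosure (gogRels bar t Gv Ge T η hGe)

instance : Group (GoGFund bar t Gv Ge T η hGe) :=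
  QuotientGroup.Quotient.group _

end GraphOfGroups

/-! ### Graphs of groups with transversals -/

/-- A graph of groups together with its fundamental group `G`, described by the universal property
that the argument uses. For a directed edge `e`, `H e` is the image of the edge group in the vertex
group at the terminal vertex of `e`, and `θ e` is the resulting isomorphism of `H e` onto
`H (bar e)`. The maps `ι v` and the elements `ε e` are the canonical images in `G`, with
`ε e = 1` along the spanning tree `T`. The field `lift` says that right actions of `G` can be
prescribed on the generators, subject to the defining relations. -/
structure GraphData (V E : Type) (Gv : V → Type) [∀ v, Group (Gv v)] [DecidableEq V]
    (G : Type) [Group G] where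
  bar : E → E
  t : E → V
  T : Set E
  v0 : V
  bar_bar : ∀ e, bar (bar e) = e
  bar_mem : ∀ e ∈ T, bar e ∈ T
  tree : ∀ u v : V, ∃! p : List E, (∀ e ∈ p, e ∈ T) ∧
    IsEdgePath (fun e => t (bar e)) t u p v ∧ List.IsChain (fun e f => f ≠ bar e) p
  H : ∀ e, Subgroup (Gv (t e))
  θ : ∀ e, H e →* Gv (t (bar e))
  θ_mem : ∀ e h, θ e h ∈ H (bar e)
  θ_inv : ∀ e (h : H e), (Pi.mulSingle (t (bar (bar e))) (θ (bar e) ⟨θ e h, θ_mem e h⟩) :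
    ∀ v, Gv v) = Pi.mulSingle (t e) h
  ι : ∀ v, Gv v →* G
  ε : E → G
  ε_bar : ∀ e, ε e * ε (bar e) = 1
  ε_tree : ∀ e ∈ T, ε e = 1
  rel : ∀ e (h : H e), ε e * ι (t e) h = ι (t (bar e)) (θ e h) * ε e
  gen : ∀ K : Subgroup G, (∀ v g, ι v g ∈ K) → (∀ e, ε e ∈ K) → ∀ g, g ∈ K
  lift : ∀ (X : Type) (av : ∀ v, Gv v → X → X) (ae : E → X → X),
    (∀ v x, av v 1 x = x) → (∀ v g h x, av v (g * h) x = av v h (av v g x)) →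
    (∀ e x, ae (bar e) (ae e x) = x) → (∀ e ∈ T, ∀ x, ae e x = x) →
    (∀ e (h : H e) x, av (t e) h (ae e x) = ae e (av (t (bar e)) (θ e h) x)) →
    ∃ A : G → X → X, (∀ x, A 1 x = x) ∧ (∀ g h x, A (g * h) x = A h (A g x)) ∧
      (∀ v g x, A (ι v g) x = av v g x) ∧ (∀ e x, A (ε e) x = ae e x)

namespace GraphData

variable {V E : Type} {Gv : V → Type} [∀ v, Group (Gv v)] [DecidableEq V]
  {G : Type} [Group G] (D : GraphData V E Gv G)

/-- The terminal vertex of an edge, where `none` stands for a fictitious edge that enters the base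
vertex. -/
@[reducible] def tt : Option E → V
  | none => D.v0
  | some e => D.t e

/-- The edge subgroup at the terminal vertex; the fictitious edge carries the trivial group. -/
@[reducible] def HH : ∀ f : Option E, Subgroup (Gv (D.tt f))
  | none => ⊥
  | some e => D.H e

/-- A choice of right coset representatives for every edge subgroup: `rep f x` is the
representative of the coset `HH f * x`. -/
structure Transversal where
  rep : ∀ f, Gv (D.tt f) → Gv (D.tt f)
  rep_mem : ∀ f x, x * (rep f x)⁻¹ ∈ D.HH f
  rep_mul : ∀ f h x, h ∈ D.HH f → rep f (h * x) = rep f x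
  rep_one : ∀ f, rep f 1 = 1

/-- A sequence of edges, each followed by an element of the vertex group at its end; the head of the
list is the last edge of the path. -/
abbrev Stack := List (Σ f : Option E, Gv (D.tt f))

variable {D} (R : D.Transversal)

lemma Transversal.rep_rep (f x) : R.rep f (R.rep f x) = R.rep f x := by
  have h := R.rep_mul f _ x (inv_mem (R.rep_mem f x))
  simpa using h

lemma Transversal.rep_mul_rep (f x g) : R.rep f (R.rep f x * g) = R.rep f (x * g) := by
  have h := R.rep_mul f _ (x * g) (inv_mem (R.rep_mem f x))
  rw [← h]
  congr 1
  group

lemma Transversal.rep_eq_one {f x} (h : x ∈ D.HH f) : R.rep f x = 1 := by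
  have := R.rep_mul f x 1 h
  rwa [mul_one, R.rep_one] at this

lemma Transversal.rep_eq_one_iff {f x} : R.rep f x = 1 ↔ x ∈ D.HH f := by
  refine ⟨fun h => ?_, R.rep_eq_one⟩
  have := R.rep_mem f x
  rwa [h, inv_one, mul_one] at this

lemma Transversal.rep_none (x) : R.rep none x = x := by
  have h := R.rep_mem none x
  exact (mul_inv_eq_one.1 (Subgroup.mem_bot.1 h)).symm

/-- The normal forms: reduced paths of the graph of groups that start at the base vertex, in which
every group element after the first is a coset representative. -/
inductive Valid : D.Stack → Prop
  | base (g : Gv (D.tt none)) : Valid [⟨none, g⟩]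
  | cons (e : E) (r : Gv (D.tt (some e))) (f : Option E) (q : Gv (D.tt f)) (l : D.Stack)
      (hr : R.rep (some e) r = r) (ht : D.tt f = D.t (D.bar e))
      (hred : ¬ (f = some (D.bar e) ∧ q = 1)) (hl : Valid (⟨f, q⟩ :: l)) :
      Valid (⟨some e, r⟩ :: ⟨f, q⟩ :: l)

/-- The part of `x` that is carried across the edge `f` to the preceding vertex, when `x` is
replaced by its coset representative. Elements of all vertex groups are collected in the product
group `∀ v, Gv v`, of which only the relevant component matters. -/
def car : ∀ f : Option E, Gv (D.tt f) → ∀ v, Gv v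
  | none, _ => 1
  | some e, x => Pi.mulSingle (D.t (D.bar e)) (D.θ e ⟨x * (R.rep (some e) x)⁻¹, R.rep_mem (some e) x⟩)

/-- The cocycle identity for the carried part, which makes `act` compatible with products. -/
lemma car_mul (f x g) : car R f (x * g) = car R f x * car R f (R.rep f x * g) := by
  cases f with
  | none => simp [car]
  | some e =>
    simp only [car]
    rw [← Pi.mulSingle_mul, ← map_mul]
    congr 2
    ext
    simp only [Subgroup.coe_mul, R.rep_mul_rep]
    group

lemma car_one_of_rep {f r} (h : R.rep f r = r) : car R f r = 1 := by
  cases f with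
  | none => rfl
  | some e =>
    simp only [car]
    have : (⟨r * (R.rep (some e) r)⁻¹, R.rep_mem (some e) r⟩ : D.H e) = 1 := by
      ext; simp [h]
    rw [this]; simp

lemma car_of_mem (e : E) (h : D.H e) :
    car R (some e) (h : Gv (D.t e)) = Pi.mulSingle (D.t (D.bar e)) (D.θ e h) := by
  simp only [car]
  congr 2
  ext
  have := R.rep_eq_one (f := some e) h.2
  simp [this]

/-- The right action of the vertex group at the end of a path: the last group element is multiplied
and replaced by its coset representative, and what splits off is carried across the last edge. Only
the component of `g` at the terminal vertex of the path matters. -/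
def act : D.Stack → (∀ v, Gv v) → D.Stack
  | [], _ => []
  | ⟨f, r⟩ :: l, g => ⟨f, R.rep f (r * g (D.tt f))⟩ :: act l (car R f (r * g (D.tt f)))

/-- The terminal vertex of a path. -/
@[reducible] def endv : D.Stack → V
  | [] => D.v0
  | ⟨f, _⟩ :: _ => D.tt f

lemma act_mul (s : D.Stack) (g h) : act R (act R s g) h = act R s (g * h) := by
  induction s generalizing g h with
  | nil => rfl
  | cons x l ih =>
    obtain ⟨f, r⟩ := x
    simp only [act, Pi.mul_apply, R.rep_mul_rep, ih, ← mul_assoc]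
    rw [car_mul R f (r * g _)]

@[simp] lemma endv_act (s : D.Stack) (g) : endv (act R s g) = endv s := by
  cases s <;> rfl

@[simp] lemma length_act (s : D.Stack) (g) : (act R s g).length = s.length := by
  induction s generalizing g with
  | nil => rfl
  | cons x l ih => simp [act, ih]

lemma act_congr (s : D.Stack) {g h : ∀ v, Gv v} (e : g (endv s) = h (endv s)) :
    act R s g = act R s h := by
  cases s with
  | nil => rfl
  | cons x l =>
    simp only [endv] at e
    simp only [act, e]

variable {R}

lemma Valid.rep_head {f r l} (h : Valid R (⟨f, r⟩ :: l)) : R.rep f r = r := by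
  cases h with
  | base => exact R.rep_none _
  | cons e r f q l hr => exact hr

lemma Valid.act_one {s} (h : Valid R s) : act R s 1 = s := by
  induction h with
  | base g => simp [act, R.rep_none]
  | cons e r f q l hr ht hred hl ih =>
    rw [act]
    simp only [Pi.one_apply, mul_one, hr, car_one_of_rep R hr, ih]

lemma Valid.act {s} (h : Valid R s) (g) : Valid R (act R s g) := by
  induction h generalizing g with
  | base g => exact Valid.base _
  | cons e r f q l hr ht hred hl ih =>
    rw [GraphData.act]
    have h2 := ih (car R (some e) (r * g (D.tt (some e))))
    rw [GraphData.act] at h2 ⊢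
    refine Valid.cons _ _ _ _ _ (R.rep_rep _ _) ht ?_ h2
    rintro ⟨rfl, h3⟩
    refine hred ⟨rfl, ?_⟩
    rw [← hl.rep_head, R.rep_eq_one_iff]
    rw [R.rep_eq_one_iff] at h3
    refine (Subgroup.mul_mem_cancel_right _ ?_).1 h3
    simp only [car, tt, Pi.mulSingle_eq_same]
    exact D.θ_mem _ _

lemma θ_injective (e : E) (h : D.H e) (hh : D.θ e h = 1) : (h : Gv (D.t e)) = 1 := by
  have h1 := D.θ_inv e h
  have h2 : (⟨D.θ e h, D.θ_mem e h⟩ : D.H (D.bar e)) = 1 := by ext; simp [hh]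
  rw [h2, map_one, Pi.mulSingle_one] at h1
  have := congrFun h1 (D.t e)
  simpa using this.symm

/-- The vertex group at the end of a normal form acts freely on it, because the edge maps are
injective. -/
lemma Valid.faithful {s} (h : Valid R s) (g) (hg : GraphData.act R s g = s) : g (endv s) = 1 := by
  induction h generalizing g with
  | base x =>
    simp only [GraphData.act, R.rep_none, List.cons.injEq, Sigma.mk.injEq, heq_eq_eq, true_and,
      mul_eq_left, and_true] at hg
    exact hg
  | cons e r f q l hr ht hred hl ih =>
    rw [GraphData.act] at hg
    simp only [List.cons.injEq, Sigma.mk.injEq, heq_eq_eq, true_and] at hg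
    have h3 := ih _ hg.2
    rw [show endv (⟨f, q⟩ :: l) = D.t (D.bar e) from ht] at h3
    simp only [car, Pi.mulSingle_eq_same] at h3
    have h4 := θ_injective _ _ h3
    simp only [hg.1] at h4
    simpa [endv] using h4

/-! ### Moving along edges -/

open Classical in
/-- The right action of an edge `e` starting at the end of the path: the last edge is cancelled
if it is `bar e`, with trivial group element after it, and otherwise `e` is appended. -/
noncomputable def step (e : E) (s : D.Stack) : D.Stack :=
  if s.head? = some ⟨some (D.bar e), 1⟩ then s.tail else ⟨some e, 1⟩ :: s

lemma step_pop (e : E) (l : D.Stack) : step e (⟨some (D.bar e), 1⟩ :: l) = l := by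
  simp [step]

lemma step_push (e : E) (s : D.Stack) (h : s.head? ≠ some ⟨some (D.bar e), 1⟩) :
    step e s = ⟨some e, 1⟩ :: s := by
  simp [step, h]

lemma step_push' (e : E) (f q) (l : D.Stack) (h : ¬ (f = some (D.bar e) ∧ q ≍ (1 : Gv (D.tt f)))) :
    step e (⟨f, q⟩ :: l) = ⟨some e, 1⟩ :: ⟨f, q⟩ :: l := by
  apply step_push
  intro h'
  simp only [List.head?_cons, Option.some.injEq, Sigma.mk.injEq] at h'
  obtain ⟨rfl, h'⟩ := h'
  exact h ⟨rfl, h'⟩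

lemma step_bar_pop (e : E) (s : D.Stack) : step (D.bar e) (⟨some e, 1⟩ :: s) = s := by
  have := step_pop (D.bar e) s
  rwa [D.bar_bar] at this

/-- Either `e` is appended to the path, or it cancels the last edge. -/
lemma Valid.step_cases {s} (h : Valid R s) {e : E} (he : endv s = D.t (D.bar e)) :
    (∃ f q l, s = ⟨f, q⟩ :: l ∧ ¬ (f = some (D.bar e) ∧ q = 1) ∧ step e s = ⟨some e, 1⟩ :: s ∧
      Valid R (⟨some e, 1⟩ :: s)) ∨
    (∃ l, s = ⟨some (D.bar e), 1⟩ :: l ∧ step e s = l ∧ Valid R l ∧ endv l = D.t e ∧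
      step (D.bar e) l = s) := by
  by_cases h1 : s.head? = some ⟨some (D.bar e), 1⟩
  · right
    obtain ⟨l, rfl⟩ : ∃ l, s = ⟨some (D.bar e), 1⟩ :: l := by
      cases s with
      | nil => simp at h1
      | cons x l => simp at h1; exact ⟨l, by rw [h1]⟩
    refine ⟨l, rfl, step_pop _ _, ?_⟩
    cases h with
    | cons e' r f q l hr ht hred hl =>
      refine ⟨hl, ?_, ?_⟩
      · simp only [endv, ht, D.bar_bar]
      · apply step_push'
        exact fun h => hred ⟨h.1, eq_of_heq h.2⟩
  · left
    have h2 := step_push e s h1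
    cases s with
    | nil => cases h
    | cons x l =>
      obtain ⟨f, q⟩ := x
      have h3 : ¬ (f = some (D.bar e) ∧ q = 1) := by
        rintro ⟨rfl, rfl⟩
        exact h1 rfl
      exact ⟨f, q, l, rfl, h3, h2, Valid.cons _ _ _ _ _ (R.rep_one _) he h3 h⟩

lemma Valid.step {s} (h : Valid R s) {e : E} (he : endv s = D.t (D.bar e)) :
    Valid R (step e s) := by
  obtain ⟨f, q, l, -, -, h2, h3⟩ | ⟨l, -, h2, h3, -⟩ := h.step_cases he <;> rwa [h2]

lemma Valid.endv_step {s} (h : Valid R s) {e : E} (he : endv s = D.t (D.bar e)) :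
    endv (GraphData.step e s) = D.t e := by
  obtain ⟨f, q, l, -, -, h2, h3⟩ | ⟨l, -, h2, -, h3, -⟩ := h.step_cases he
  · rw [h2]
  · rwa [h2]

lemma Valid.step_bar_step {s} (h : Valid R s) {e : E} (he : endv s = D.t (D.bar e)) :
    GraphData.step (D.bar e) (GraphData.step e s) = s := by
  obtain ⟨f, q, l, -, -, h2, h3⟩ | ⟨l, -, h2, -, -, h3⟩ := h.step_cases he
  · rw [h2, step_bar_pop]
  · rw [h2, h3]

/-- The relation `e * k = θ e k * e` for the right actions. -/
lemma Valid.act_step {s} (h : Valid R s) {e : E} (he : endv s = D.t (D.bar e)) (k : D.H e) :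
    GraphData.act R (GraphData.step e s) (Pi.mulSingle (D.t e) (k : Gv (D.t e))) =
      GraphData.step e (GraphData.act R s (Pi.mulSingle (D.t (D.bar e)) (D.θ e k))) := by
  obtain ⟨f, q, l, rfl, h1, h2, h3⟩ | ⟨l, rfl, h2, h4, -, h3⟩ := h.step_cases he
  · have h4 : R.rep (some e) (k : Gv (D.t e)) = 1 := R.rep_eq_one (f := some e) k.2
    have h5 : GraphData.act R (⟨some e, 1⟩ :: ⟨f, q⟩ :: l)
        (Pi.mulSingle (D.t e) (k : Gv (D.t e))) = ⟨some e, 1⟩ ::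
          GraphData.act R (⟨f, q⟩ :: l) (Pi.mulSingle (D.t (D.bar e)) (D.θ e k)) := by
      rw [GraphData.act]
      simp only [tt, Pi.mulSingle_eq_same, one_mul]
      rw [car_of_mem, h4]
    have h6 := h3.act (Pi.mulSingle (D.t e) (k : Gv (D.t e)))
    rw [h2, h5]
    rw [h5] at h6
    rw [GraphData.act] at h6 ⊢
    cases h6 with
    | cons _ _ _ _ _ _ _ hred _ =>
      rw [step_push']
      rintro ⟨rfl, h⟩
      exact hred ⟨rfl, eq_of_heq h⟩
  · rw [step_pop, GraphData.act]
    simp only [tt, Pi.mulSingle_eq_same, one_mul]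
    have h5 : R.rep (some (D.bar e)) (D.θ e k) = 1 :=
      R.rep_eq_one (f := some (D.bar e)) (D.θ_mem e k)
    rw [h5, step_pop]
    have h6 := car_of_mem R (D.bar e) ⟨D.θ e k, D.θ_mem e k⟩
    simp only at h6
    rw [h6, D.θ_inv]

/-! ### Transport along the spanning tree -/

/-- Moving along an edge path by successive steps. -/
noncomputable def tr (p : List E) (s : D.Stack) : D.Stack :=
  p.foldl (fun s e => GraphData.step e s) s

variable (D) in
/-- The reduced edge path in the spanning tree between two vertices. -/
noncomputable def geo (u v : V) : List E := (D.tree u v).choose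

/-- Moving along the spanning tree to the vertex `v`. -/
noncomputable def tau (v : V) (s : D.Stack) : D.Stack := tr (D.geo (endv s) v) s

lemma geo_spec (u v : V) : (∀ e ∈ D.geo u v, e ∈ D.T) ∧
    IsEdgePath (fun e => D.t (D.bar e)) D.t u (D.geo u v) v ∧
    List.IsChain (fun e f => f ≠ D.bar e) (D.geo u v) := (D.tree u v).choose_spec.1

lemma geo_unique {u v : V} {p : List E} (h1 : ∀ e ∈ p, e ∈ D.T)
    (h2 : IsEdgePath (fun e => D.t (D.bar e)) D.t u p v)
    (h3 : List.IsChain (fun e f => f ≠ D.bar e) p) : D.geo u v = p :=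
  ((D.tree u v).choose_spec.2 p ⟨h1, h2, h3⟩).symm

lemma Valid.tr {s} (h : Valid R s) {p : List E} {v : V}
    (hp : IsEdgePath (fun e => D.t (D.bar e)) D.t (endv s) p v) :
    Valid R (tr p s) ∧ endv (GraphData.tr p s) = v := by
  induction p generalizing s with
  | nil => exact ⟨h, hp⟩
  | cons e p ih =>
    obtain ⟨h1, h2⟩ := hp
    refine ih (h.step h1.symm) ?_
    rwa [h.endv_step h1.symm]

lemma Valid.tau {s} (h : Valid R s) (v : V) : Valid R (tau v s) := (h.tr (geo_spec _ v).2.1).1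

lemma Valid.endv_tau {s} (h : Valid R s) (v : V) : endv (GraphData.tau v s) = v :=
  (h.tr (geo_spec _ v).2.1).2

lemma tau_self {s : D.Stack} {v} (h : endv s = v) : tau v s = s := by
  have : D.geo v v = [] := geo_unique (by simp) rfl (by simp)
  rw [tau, h, this]; rfl

/-- A step along an edge of the spanning tree does not change where transport leads: the step either
prolongs the geodesic or cancels its first edge. -/
lemma Valid.tau_step {s} (h : Valid R s) {e : E} (he : endv s = D.t (D.bar e)) (heT : e ∈ D.T)
    (v : V) : GraphData.tau v (GraphData.step e s) = GraphData.tau v s := by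
  have h1 := h.endv_step he
  have h2 := h.step_bar_step he
  obtain ⟨g1, g2, g3⟩ := geo_spec (D := D) (D.t e) v
  by_cases hq : (D.geo (D.t e) v).head? = some (D.bar e)
  · obtain ⟨q, hq⟩ : ∃ q, D.geo (D.t e) v = D.bar e :: q := by
      cases h : D.geo (D.t e) v with
      | nil => simp [h] at hq
      | cons x l => simp [h] at hq; exact ⟨l, by rw [hq]⟩
    rw [hq] at g1 g2 g3
    have h3 : D.geo (D.t (D.bar e)) v = q :=
      geo_unique (fun x hx => g1 x (by simp [hx])) g2.2 (List.isChain_cons.1 g3).2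
    rw [GraphData.tau, GraphData.tau, h1, hq, he, h3, GraphData.tr, List.foldl_cons, h2]; rfl
  · have h3 : D.geo (D.t (D.bar e)) v = e :: D.geo (D.t e) v := by
      refine geo_unique ?_ ⟨rfl, g2⟩ (List.isChain_cons.2 ⟨?_, g3⟩)
      · intro x hx
        obtain rfl | hx := List.mem_cons.1 hx
        · exact heT
        · exact g1 x hx
      · rintro y hy rfl
        exact hq hy
    rw [GraphData.tau, GraphData.tau, h1, he, h3]; rfl

lemma Valid.tau_tr {s} (h : Valid R s) {p : List E} {w : V} (hpT : ∀ e ∈ p, e ∈ D.T)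
    (hp : IsEdgePath (fun e => D.t (D.bar e)) D.t (endv s) p w) (v : V) :
    GraphData.tau v (GraphData.tr p s) = GraphData.tau v s := by
  induction p generalizing s with
  | nil => rfl
  | cons e p ih =>
    obtain ⟨h1, h2⟩ := hp
    rw [← h.tau_step h1.symm (hpT e (by simp)) v]
    refine ih (h.step h1.symm) (fun x hx => hpT x (by simp [hx])) ?_
    rwa [h.endv_step h1.symm]

lemma Valid.tau_tau {s} (h : Valid R s) (v w : V) :
    GraphData.tau v (GraphData.tau w s) = GraphData.tau v s :=
  h.tau_tr (geo_spec _ w).1 (geo_spec _ w).2.1 v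

/-! ### Evaluation of normal forms -/

variable (D) in
/-- The image of an edge in the fundamental group, trivial for the fictitious edge. -/
def εε : Option E → G
  | none => 1
  | some e => D.ε e

/-- The element of the fundamental group represented by a path. -/
def val : D.Stack → G
  | [] => 1
  | ⟨f, r⟩ :: l => val l * D.εε f * D.ι (D.tt f) r

lemma Valid.val_act {s} (h : Valid R s) (g) :
    val (GraphData.act R s g) = val s * D.ι (endv s) (g (endv s)) := by
  induction h generalizing g with
  | base x => simp [GraphData.act, val, endv, R.rep_none, mul_assoc]
  | cons e r f q l hr ht hred hl ih =>
    have key : ∀ k : ∀ v, Gv v, D.ι (endv (⟨f, q⟩ :: l)) (k (endv (⟨f, q⟩ :: l))) =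
        D.ι (D.t (D.bar e)) (k (D.t (D.bar e))) := fun k => by
      rw [show endv (⟨f, q⟩ :: l) = D.t (D.bar e) from ht]
    have e1 : val (⟨some e, r⟩ :: ⟨f, q⟩ :: l) = val (⟨f, q⟩ :: l) * D.ε e * D.ι (D.t e) r := rfl
    rw [GraphData.act, val, ih, key, e1]
    simp only [car, Pi.mulSingle_eq_same, εε]
    rw [mul_assoc (val _) _ (D.ε e), ← D.rel]
    simp [mul_assoc]

lemma Valid.val_step {s} (h : Valid R s) {e : E} (he : endv s = D.t (D.bar e)) :
    val (GraphData.step e s) = val s * D.ε e := by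
  obtain ⟨f, q, l, rfl, h1, h2, h3⟩ | ⟨l, rfl, h2, h4, -, h3⟩ := h.step_cases he
  · rw [h2, val]
    simp [εε]
  · rw [h2, val]
    have := D.ε_bar (D.bar e)
    rw [D.bar_bar] at this
    simp [εε, mul_assoc, this]

lemma Valid.val_tr {s} (h : Valid R s) {p : List E} {w : V} (hpT : ∀ e ∈ p, e ∈ D.T)
    (hp : IsEdgePath (fun e => D.t (D.bar e)) D.t (endv s) p w) :
    val (GraphData.tr p s) = val s := by
  induction p generalizing s with
  | nil => rfl
  | cons e p ih =>
    obtain ⟨h1, h2⟩ := hp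
    have h3 := h.val_step h1.symm
    rw [D.ε_tree e (hpT e (by simp)), mul_one] at h3
    rw [← h3]
    refine ih (h.step h1.symm) (fun x hx => hpT x (by simp [hx])) ?_
    rwa [h.endv_step h1.symm]

lemma Valid.val_tau {s} (h : Valid R s) (v : V) : val (GraphData.tau v s) = val s :=
  h.val_tr (geo_spec _ v).1 (geo_spec _ v).2.1

variable (R) in
/-- Van der Waerden's argument: the fundamental group acts from the right on the normal forms that
end at the base vertex. -/
lemma exists_action : ∃ A : G → {s : D.Stack // Valid R s ∧ endv s = D.v0} →
      {s : D.Stack // Valid R s ∧ endv s = D.v0},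
    (∀ x, A 1 x = x) ∧ (∀ g h x, A (g * h) x = A h (A g x)) ∧
    (∀ v g x, (A (D.ι v g) x).1 = tau D.v0 (act R (tau v x.1) (Pi.mulSingle v g))) ∧
    (∀ e x, (A (D.ε e) x).1 = tau D.v0 (step e (tau (D.t (D.bar e)) x.1))) := by
  let X := {s : D.Stack // Valid R s ∧ endv s = D.v0}
  let av : ∀ v, Gv v → X → X := fun v g x =>
    ⟨tau D.v0 (act R (tau v x.1) (Pi.mulSingle v g)),
      ((x.2.1.tau v).act _).tau _, ((x.2.1.tau v).act _).endv_tau _⟩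
  have hst : ∀ (x : X) e, endv (tau (D.t (D.bar e)) x.1) = D.t (D.bar e) := fun x e =>
    x.2.1.endv_tau _
  let ae : E → X → X := fun e x => ⟨tau D.v0 (step e (tau (D.t (D.bar e)) x.1)),
    ((x.2.1.tau _).step (hst x e)).tau _, ((x.2.1.tau _).step (hst x e)).endv_tau _⟩
  have hav : ∀ v g (x : X), tau v (av v g x).1 = act R (tau v x.1) (Pi.mulSingle v g) := by
    intro v g x
    have h1 : Valid R (act R (tau v x.1) (Pi.mulSingle v g)) := (x.2.1.tau v).act _
    rw [h1.tau_tau, tau_self]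
    rw [endv_act, x.2.1.endv_tau]
  have hae : ∀ e (x : X), tau (D.t e) (ae e x).1 = step e (tau (D.t (D.bar e)) x.1) := by
    intro e x
    rw [((x.2.1.tau _).step (hst x e)).tau_tau, tau_self]
    exact (x.2.1.tau _).endv_step (hst x e)
  have := D.lift X av ae ?_ ?_ ?_ ?_ ?_
  · obtain ⟨A, h1, h2, h3, h4⟩ := this
    exact ⟨A, h1, h2, fun v g x => congrArg Subtype.val (h3 v g x),
      fun e x => congrArg Subtype.val (h4 e x)⟩
  · intro v x
    apply Subtype.ext
    simp only [av, Pi.mulSingle_one]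
    rw [(x.2.1.tau v).act_one, x.2.1.tau_tau, tau_self x.2.2]
  · intro v g h x
    apply Subtype.ext
    change _ = tau D.v0 (act R (tau v (av v g x).1) (Pi.mulSingle v h))
    rw [hav, act_mul, ← Pi.mulSingle_mul]
  · intro e x
    apply Subtype.ext
    change tau D.v0 (step (D.bar e) (tau (D.t (D.bar (D.bar e))) (ae e x).1)) = x.1
    have : tau (D.t (D.bar (D.bar e))) (ae e x).1 = tau (D.t e) (ae e x).1 := by rw [D.bar_bar]
    rw [this, hae, (x.2.1.tau _).step_bar_step (hst x e), x.2.1.tau_tau, tau_self x.2.2]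
  · intro e he x
    apply Subtype.ext
    change tau D.v0 (step e (tau (D.t (D.bar e)) x.1)) = x.1
    rw [(x.2.1.tau _).tau_step (hst x e) he, x.2.1.tau_tau, tau_self x.2.2]
  · intro e h x
    apply Subtype.ext
    change tau D.v0 (act R (tau (D.t e) (ae e x).1) _) =
      tau D.v0 (step e (tau (D.t (D.bar e)) (av (D.t (D.bar e)) (D.θ e h) x).1))
    rw [hae, hav, (x.2.1.tau _).act_step (hst x e)]

lemma Valid.endv_cons_cons {e r f q l} (h : Valid R (⟨some e, r⟩ :: ⟨f, q⟩ :: l)) :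
    D.tt f = D.t (D.bar e) := by
  cases h with
  | cons _ _ _ _ _ _ ht => exact ht

/-- Normal forms with the same value agree after transport to a common vertex: acting by the value of
a normal form on the path without edges recovers the normal form, up to transport. -/
lemma Valid.tau_eq_of_val_eq {s s'} (h : Valid R s) (h' : Valid R s') (hv : val s = val s') (v : V) :
    GraphData.tau v s = GraphData.tau v s' := by
  obtain ⟨A, A1, A2, A3, A4⟩ := exists_action R
  let x0 : {s : D.Stack // Valid R s ∧ endv s = D.v0} := ⟨[⟨none, 1⟩], Valid.base 1, rfl⟩
  have key : ∀ s, Valid R s → (A (val s) x0).1 = GraphData.tau D.v0 s := by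
    intro s hs
    induction hs with
    | base g =>
      rw [show val [⟨none, g⟩] = D.ι D.v0 g by simp [val, εε, tt], A3]
      rw [tau_self (v := D.v0) x0.2.2]
      simp [GraphData.act, x0, tt, R.rep_none]
    | cons e r f q l hr ht hred hl ih =>
      have e1 : val (⟨some e, r⟩ :: ⟨f, q⟩ :: l) = val (⟨f, q⟩ :: l) * D.ε e * D.ι (D.t e) r := rfl
      have e2 : endv (⟨f, q⟩ :: l) = D.t (D.bar e) := ht
      rw [e1, A2, A2, A3, A4, ih, hl.tau_tau, tau_self e2, (hl.step e2).tau_tau,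
        tau_self (hl.endv_step e2), step_push', GraphData.act]
      · simp only [tt, Pi.mulSingle_eq_same, one_mul]
        rw [car_one_of_rep R hr, hl.act_one]
        have : R.rep (some e) r = r := hr
        rw [this]
      · exact fun h => hred ⟨h.1, eq_of_heq h.2⟩
  rw [← h.tau_tau v D.v0, ← h'.tau_tau v D.v0, ← key s h, ← key s' h', hv]

/-- Uniqueness of normal forms with a given terminal vertex. -/
lemma Valid.eq_of_val_eq {s s'} (h : Valid R s) (h' : Valid R s') (hv : val s = val s')
    (he : endv s = endv s') : s = s' := by
  have := h.tau_eq_of_val_eq h' hv (endv s')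
  rwa [tau_self he, tau_self rfl] at this

variable (R) in
/-- Existence of normal forms with a given terminal vertex. -/
lemma exists_valid (g : G) (v : V) : ∃ s, Valid R s ∧ endv s = v ∧ val s = g := by
  obtain ⟨A, A1, A2, A3, A4⟩ := exists_action R
  have key : ∀ g x, val (A g x).1 = val x.1 * g := by
    refine fun g => D.gen
      { carrier := {g | ∀ x, val (A g x).1 = val x.1 * g}
        mul_mem' := ?_
        one_mem' := ?_
        inv_mem' := ?_ } ?_ ?_ g
    · intro a b ha hb x
      rw [A2, hb, ha, mul_assoc]
    · intro x
      rw [A1, mul_one]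
    · intro a ha x
      have h1 := ha (A a⁻¹ x)
      rw [← A2, inv_mul_cancel, A1] at h1
      rw [h1]; group
    · intro v g x
      rw [A3, ((x.2.1.tau v).act _).val_tau, (x.2.1.tau v).val_act, x.2.1.endv_tau, x.2.1.val_tau,
        Pi.mulSingle_eq_same]
    · intro e x
      have := x.2.1.endv_tau (D.t (D.bar e))
      rw [A4, ((x.2.1.tau _).step this).val_tau, (x.2.1.tau _).val_step this, x.2.1.val_tau]
  let x0 : {s : D.Stack // Valid R s ∧ endv s = D.v0} := ⟨[⟨none, 1⟩], Valid.base 1, rfl⟩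
  have h := (A g x0).2.1
  refine ⟨tau v (A g x0).1, h.tau v, h.endv_tau v, ?_⟩
  rw [h.val_tau, key]
  simp [x0, val, εε]

/-- Vertex groups embed in the fundamental group. -/
lemma ι_injective (R : D.Transversal) (v : V) (x : Gv v) (h : D.ι v x = 1) : x = 1 := by
  obtain ⟨s, h1, rfl, -⟩ := exists_valid R 1 v
  have h2 := h1.faithful (Pi.mulSingle _ x)
  rw [Pi.mulSingle_eq_same] at h2
  apply h2
  refine (h1.act _).eq_of_val_eq h1 ?_ (by simp)
  rw [h1.val_act, Pi.mulSingle_eq_same, h, mul_one]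

end GraphData

/-! ### Words and stacking systems -/

lemma wordVal_append {G α : Type} [Monoid G] (π : α → G) (u v : List α) :
    wordVal π (u ++ v) = wordVal π u * wordVal π v := by
  simp [wordVal]

lemma wordVal_nil {G α : Type} [Monoid G] (π : α → G) : wordVal π ([] : List α) = 1 := rfl

lemma wordVal_singleton {G α : Type} [Monoid G] (π : α → G) (a : α) : wordVal π [a] = π a := by
  simp [wordVal]

lemma wordVal_mem {G α : Type} [Group G] (π : α → G) (K : Subgroup G) (w : List α)
    (h : ∀ a ∈ w, π a ∈ K) : wordVal π w ∈ K := by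
  refine Subgroup.list_prod_mem _ fun x hx => ?_
  obtain ⟨a, ha, rfl⟩ := List.mem_map.1 hx
  exact h a ha

/-- `StackStep π inv st p q` says that the letter of `p` is met while rewriting the letter of `q`
by the stacking function, so that the condition (F3) excludes infinite descending chains. -/
def StackStep {G α : Type} [Group G] (π : α → G) (inv : α → α) (st : StackingData α)
    (p q : List α × α) : Prop :=
  q.1 ∈ st.N ∧ q.1 ++ [q.2] ∉ st.N ∧ (¬ ∃ y', q.1 = y' ++ [inv q.2]) ∧
    ∃ u u' : List α, st.phi q.1 q.2 = u ++ p.2 :: u' ∧ p.1 ∈ st.N ∧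
      wordVal π p.1 = wordVal π (q.1 ++ u)

lemma IsStacking.wf {G α : Type} [Group G] {π : α → G} {inv : α → α} {st : StackingData α}
    (h : IsStacking G π inv st) : WellFounded (StackStep π inv st) := by
  rw [wellFounded_iff_isEmpty_descending_chain]
  exact ⟨fun ⟨s, hs⟩ => h.F3 ⟨s, hs⟩⟩

lemma StackStep.not_exists_chain {G α : Type} [Group G] {π : α → G} {inv : α → α}
    {st : StackingData α} (h : ∀ p : List α × α, p.1 ∈ st.N → Acc (StackStep π inv st) p) :
    ¬ ∃ s : ℕ → List α × α, ∀ i, StackStep π inv st (s (i + 1)) (s i) := by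
  rintro ⟨s, hs⟩
  have key : ∀ p, Acc (StackStep π inv st) p → ∀ i, s i ≠ p := by
    intro p hp
    induction hp with
    | intro p _ ih =>
      rintro i rfl
      exact ih _ (hs i) (i + 1) rfl
  exact key _ (h (s 0) (hs 0).1) 0 rfl

/-- If `c` does not occur in `P` or `Q`, then an occurrence of `c` in `P ++ M ++ Q` lies in `M`. -/
lemma List.split_middle {α : Type} {P M Q u u' : List α} {c : α} (hP : c ∉ P) (hQ : c ∉ Q)
    (h : P ++ M ++ Q = u ++ c :: u') : ∃ u₁ u₂, u = P ++ u₁ ∧ M = u₁ ++ c :: u₂ := by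
  rw [List.append_assoc, List.append_eq_append_iff] at h
  obtain ⟨u₁, rfl, h⟩ | ⟨b, rfl, h⟩ := h
  · rw [List.append_eq_append_iff] at h
    obtain ⟨b, rfl, h⟩ | ⟨b, rfl, h⟩ := h
    · exact absurd (by rw [h]; simp) hQ
    · cases b with
      | nil =>
        simp only [List.nil_append] at h
        exact absurd (by rw [← h]; simp) hQ
      | cons x b =>
        simp only [List.cons_append, List.cons.injEq] at h
        obtain ⟨rfl, -⟩ := h
        exact ⟨u₁, b, rfl, rfl⟩
  · cases b with
    | nil =>
      simp only [List.nil_append] at h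
      rw [eq_comm, List.append_eq_cons_iff] at h
      obtain ⟨rfl, h⟩ | ⟨M', rfl, h⟩ := h
      · exact absurd (by rw [h]; simp) hQ
      · exact ⟨[], M', by simp, rfl⟩
    | cons x b =>
      simp only [List.cons_append, List.cons.injEq] at h
      obtain ⟨rfl, -⟩ := h
      exact absurd (by simp) hP

lemma List.prefix_append_cases {α : Type} {p u v : List α} (h : p <+: u ++ v) :
    p <+: u ∨ ∃ v', p = u ++ v' ∧ v' <+: v := by
  obtain ⟨k, hk⟩ := h
  obtain ⟨a, rfl, -⟩ | ⟨a, rfl, rfl⟩ := List.append_eq_append_iff.1 hk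
  · exact Or.inl (List.prefix_append _ _)
  · exact Or.inr ⟨a, rfl, List.prefix_append _ _⟩

namespace GraphData

variable {V E : Type} {Gv : V → Type} [∀ v, Group (Gv v)] [DecidableEq V]
  {G : Type} [Group G]

/-- A stackable structure for the vertex group at the end of each edge, respecting the edge
subgroup; the fictitious edge into the base vertex is included. Different edges into the same vertex
use different alphabets. Only the part of the conditions that the argument uses is recorded. -/
structure Letters (D : GraphData V E Gv G) where
  A : Option E → Type
  fin : ∀ f, Finite (A f)
  π : ∀ f, A f → Gv (D.tt f)
  inv : ∀ f, A f → A f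
  st : ∀ f, StackingData (A f)
  stack : ∀ f, IsStacking (Gv (D.tt f)) (π f) (inv f) (st f)
  B : ∀ f, Set (A f)
  B_inv : ∀ f, ∀ b ∈ B f, inv f b ∈ B f
  B_mem : ∀ f, ∀ b ∈ B f, π f b ∈ D.HH f
  NH : ∀ f, Set (List (A f))
  NTr : ∀ f, Set (List (A f))
  NH_sub : ∀ f, ∀ w ∈ NH f, ∀ b ∈ w, b ∈ B f
  NTr_prefix : ∀ f, PrefixClosed (NTr f)
  NTr_rep : ∀ f, ∀ g : Gv (D.tt f), ∃! w, w ∈ NTr f ∧ wordVal (π f) w * g⁻¹ ∈ D.HH f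
  N_eq : ∀ f, (st f).N = {w | ∃ u ∈ NH f, ∃ v ∈ NTr f, w = u ++ v}
  transl : ∀ f (a : A f), ∀ y ∈ (st f).N, ∀ y' ∈ (st f).N,
    ¬ (wordVal (π f) y ∈ D.HH f ∧ a ∈ B f) →
    (∃ h ∈ D.HH f, wordVal (π f) y' = h * wordVal (π f) y) → (st f).phi y' a = (st f).phi y a

namespace Letters

variable {D : GraphData V E Gv G} (L : D.Letters)

/-- The word in `NTr f` that represents the coset of `x`. -/
noncomputable def w (f : Option E) (x : Gv (D.tt f)) : List (L.A f) := (L.NTr_rep f x).choose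

lemma w_mem (f x) : L.w f x ∈ L.NTr f := (L.NTr_rep f x).choose_spec.1.1

lemma w_coset (f x) : wordVal (L.π f) (L.w f x) * x⁻¹ ∈ D.HH f := (L.NTr_rep f x).choose_spec.1.2

lemma w_unique {f x v} (h1 : v ∈ L.NTr f) (h2 : wordVal (L.π f) v * x⁻¹ ∈ D.HH f) : L.w f x = v :=
  ((L.NTr_rep f x).choose_spec.2 v ⟨h1, h2⟩).symm

lemma nil_mem_NTr (f) : [] ∈ L.NTr f := L.NTr_prefix f _ (L.w_mem f 1) _ List.nil_prefix

lemma w_wordVal {f v} (h : v ∈ L.NTr f) : L.w f (wordVal (L.π f) v) = v :=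
  L.w_unique h (by simp)

lemma w_mul {f h x} (hh : h ∈ D.HH f) : L.w f (h * x) = L.w f x := by
  apply L.w_unique (L.w_mem _ _)
  have := mul_mem (L.w_coset f x) (inv_mem hh)
  simpa [mul_assoc] using this

lemma w_of_mem {f x} (h : x ∈ D.HH f) : L.w f x = [] :=
  L.w_unique (L.nil_mem_NTr f) (by simpa [wordVal_nil] using h)

/-- The right transversals given by the normal forms of the vertex groups. -/
noncomputable def R : D.Transversal where
  rep f x := wordVal (L.π f) (L.w f x)
  rep_mem f x := by simpa using inv_mem (L.w_coset f x)
  rep_mul f h x hh := by rw [L.w_mul hh]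
  rep_one f := by rw [L.w_of_mem (one_mem _)]; rfl

lemma R_rep (f x) : L.R.rep f x = wordVal (L.π f) (L.w f x) := rfl

lemma w_rep (f x) : L.w f (L.R.rep f x) = L.w f x := L.w_wordVal (L.w_mem f x)

/-- The letters: those of all the alphabets of vertex groups, and the edges outside the spanning
tree. -/
abbrev Alpha := (Σ f, L.A f) ⊕ {e : E // e ∉ D.T}

/-- The elements of the fundamental group given by the letters. -/
def eval : L.Alpha → G
  | .inl ⟨f, a⟩ => D.ι (D.tt f) (L.π f a)
  | .inr e => D.ε e

/-- The inverse of a letter. -/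
def invA : L.Alpha → L.Alpha
  | .inl ⟨f, a⟩ => .inl ⟨f, L.inv f a⟩
  | .inr e => .inr ⟨D.bar e, fun h => e.2 (by have := D.bar_mem _ h; rwa [D.bar_bar] at this)⟩

/-- A word in the letters belonging to the edge `f`. -/
def emb (f : Option E) (u : List (L.A f)) : List L.Alpha := u.map fun a => .inl ⟨f, a⟩

open Classical in
/-- The word of an edge, which is empty on the spanning tree. -/
noncomputable def edgeWord : Option E → List L.Alpha
  | none => []
  | some e => if h : e ∈ D.T then [] else [.inr ⟨e, h⟩]

/-- The word of a normal form. Edges of the spanning tree leave no trace in it. -/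
noncomputable def word : D.Stack → List L.Alpha
  | [] => []
  | ⟨f, r⟩ :: l => word l ++ L.edgeWord f ++ L.emb f (L.w f r)

lemma wordVal_emb (f u) : wordVal L.eval (L.emb f u) = D.ι (D.tt f) (wordVal (L.π f) u) := by
  simp only [wordVal, emb, map_list_prod, List.map_map]
  rfl

lemma wordVal_edgeWord (f) : wordVal L.eval (L.edgeWord f) = D.εε f := by
  cases f with
  | none => rfl
  | some e =>
    by_cases h : e ∈ D.T
    · simp [edgeWord, h, wordVal_nil, εε, D.ε_tree]
    · simp [edgeWord, h, wordVal_singleton, εε, eval]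

lemma wordVal_word {s} (hs : Valid L.R s) : wordVal L.eval (L.word s) = val s := by
  induction s with
  | nil => cases hs
  | cons x l ih =>
    obtain ⟨f, r⟩ := x
    have hr : wordVal (L.π f) (L.w f r) = r := hs.rep_head
    have hl : wordVal L.eval (L.word l) = val l := by
      cases hs with
      | base => rfl
      | cons _ _ _ _ _ _ _ _ hl => exact ih hl
    rw [word, wordVal_append, wordVal_append, wordVal_emb, hr, hl, wordVal_edgeWord, val]

lemma word_step {e : E} (he : e ∈ D.T) (s : D.Stack) : L.word (step e s) = L.word s := by
  by_cases h : s.head? = some ⟨some (D.bar e), 1⟩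
  · cases s with
    | nil => simp at h
    | cons x l =>
      obtain rfl : x = ⟨some (D.bar e), 1⟩ := by simpa using h
      rw [step_pop, word, L.w_of_mem (one_mem _)]
      simp [edgeWord, D.bar_mem e he, emb]
  · rw [step_push e s h, word, L.w_of_mem (one_mem _)]
    simp [edgeWord, he, emb]

lemma word_tau (v : V) (s : D.Stack) : L.word (tau v s) = L.word s := by
  have : ∀ (p : List E) (s : D.Stack), (∀ e ∈ p, e ∈ D.T) → L.word (tr p s) = L.word s := by
    intro p
    induction p with
    | nil => intro s _; rfl
    | cons e p ih =>
      intro s hp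
      rw [tr, List.foldl_cons]
      exact (ih _ fun x hx => hp x (by simp [hx])).trans (L.word_step (hp e (by simp)) s)
  exact this _ _ (geo_spec _ v).1

lemma word_eq_of_val_eq {s s'} (h : Valid L.R s) (h2 : Valid L.R s') (hv : val s = val s') :
    L.word s = L.word s' := by
  rw [← L.word_tau D.v0 s, ← L.word_tau D.v0 s', h.tau_eq_of_val_eq h2 hv]

/-- The language of normal forms of the fundamental group. -/
def N : Set (List L.Alpha) := {y | ∃ s, Valid L.R s ∧ L.word s = y}

lemma nf_unique (g : G) : ∃! y, y ∈ L.N ∧ wordVal L.eval y = g := by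
  obtain ⟨s, hs, -, rfl⟩ := exists_valid L.R g D.v0
  refine ⟨L.word s, ⟨⟨s, hs, rfl⟩, L.wordVal_word hs⟩, ?_⟩
  rintro _ ⟨⟨s', hs', rfl⟩, h⟩
  rw [L.wordVal_word hs'] at h
  exact L.word_eq_of_val_eq hs' hs h

lemma eq_word_of_wordVal_eq {y s} (hy : y ∈ L.N) (hs : Valid L.R s)
    (h : wordVal L.eval y = val s) : y = L.word s :=
  (L.nf_unique (val s)).unique ⟨hy, h⟩ ⟨⟨s, hs, rfl⟩, L.wordVal_word hs⟩

/-- Replacing the last group element of a normal form by another coset representative. -/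
lemma valid_replace {f r l v} (h : Valid L.R (⟨f, r⟩ :: l)) (hv : v ∈ L.NTr f) :
    Valid L.R (⟨f, wordVal (L.π f) v⟩ :: l) ∧
      L.word (⟨f, wordVal (L.π f) v⟩ :: l) = L.word l ++ L.edgeWord f ++ L.emb f v := by
  constructor
  · cases h with
    | base => exact Valid.base _
    | cons e r f q l hr ht hred hl =>
      refine Valid.cons _ _ _ _ _ ?_ ht hred hl
      rw [R_rep, L.w_wordVal hv]
  · rw [word, L.w_wordVal hv]

lemma nil_mem_N : [] ∈ L.N := by
  refine ⟨[⟨none, 1⟩], Valid.base 1, ?_⟩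
  simp [word, edgeWord, emb, L.w_of_mem (one_mem _)]

lemma prefixClosed_N : PrefixClosed L.N := by
  rintro _ ⟨s, hs, rfl⟩
  induction s with
  | nil => cases hs
  | cons x l ih =>
    obtain ⟨f, r⟩ := x
    intro p hp
    have hl : ∀ p, p <+: L.word l → p ∈ L.N := by
      cases hs with
      | base =>
        intro p hp
        rw [List.prefix_nil.1 hp]
        exact L.nil_mem_N
      | cons _ _ _ _ _ _ _ _ hl => exact ih hl
    have hsuf : ∀ v, v ∈ L.NTr f → L.word l ++ L.edgeWord f ++ L.emb f v ∈ L.N := fun v hv =>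
      ⟨_, (L.valid_replace hs hv).1, (L.valid_replace hs hv).2⟩
    rw [word] at hp
    obtain hp | ⟨v, rfl, hv⟩ := List.prefix_append_cases hp
    · obtain hp | ⟨v, rfl, hv⟩ := List.prefix_append_cases hp
      · exact hl p hp
      · have hv' : v = [] ∨ v = L.edgeWord f := by
          cases f with
          | none => exact Or.inl (List.prefix_nil.1 hv)
          | some e =>
            by_cases he : e ∈ D.T
            · simp only [edgeWord, he, dite_true] at hv
              exact Or.inl (List.prefix_nil.1 hv)
            · simp only [edgeWord, he, dite_false] at hv ⊢
              simpa [List.prefix_cons_iff] using hv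
        obtain rfl | rfl := hv'
        · simpa using hl _ (List.prefix_refl _)
        · simpa [emb] using hsuf [] (L.nil_mem_NTr f)
    · obtain ⟨v, rfl⟩ : ∃ v', v = L.emb f v' := by
        obtain ⟨k, hk⟩ := hv
        obtain ⟨v', -, -, h, -⟩ := List.map_eq_append_iff.1 hk.symm
        exact ⟨v', h.symm⟩
      refine hsuf v (L.NTr_prefix f _ (L.w_mem f r) v ?_)
      refine (List.prefix_map_iff_of_injective ?_).1 hv
      intro a b hab
      simpa using hab

/-! ### The stacking function of the fundamental group -/

lemma NTr_sub_N {f v} (hv : v ∈ L.NTr f) : v ∈ (L.st f).N := by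
  have h1 : [] ∈ (L.st f).N := by
    obtain ⟨y, ⟨hy, -⟩, -⟩ := (L.stack f).nf 1
    exact (L.stack f).prefixClosed _ hy _ List.nil_prefix
  rw [L.N_eq] at h1 ⊢
  obtain ⟨u, hu, v', -, h⟩ := h1
  obtain ⟨rfl, -⟩ := List.append_eq_nil_iff.1 h.symm
  exact ⟨[], hu, v, hv, rfl⟩

lemma exists_cw (f : Option E) (v : V) (x : Gv v) : ∃ u : List (L.A f), D.tt f = v →
    D.ι (D.tt f) (wordVal (L.π f) u) = D.ι v x := by
  by_cases h : D.tt f = v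
  · subst h
    obtain ⟨u, ⟨-, hu⟩, -⟩ := (L.stack f).nf x
    exact ⟨u, fun _ => by rw [hu]⟩
  · exact ⟨[], fun h2 => absurd h2 h⟩

/-- A word in the alphabet of the edge `f` for an element of the vertex group at its end; junk if
`f` does not end at the given vertex. -/
noncomputable def cw (f : Option E) (v : V) (x : Gv v) : List (L.A f) := (L.exists_cw f v x).choose

lemma cw_spec {f : Option E} {v : V} (x : Gv v) (h : D.tt f = v) :
    D.ι (D.tt f) (wordVal (L.π f) (L.cw f v x)) = D.ι v x := (L.exists_cw f v x).choose_spec h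

open Classical in
/-- The image under `θ e` of a letter of the edge `e`; junk if the letter is not in `H e`. -/
noncomputable def θ' (e : E) (a : L.A (some e)) : Gv (D.t (D.bar e)) :=
  if h : L.π (some e) a ∈ D.H e then D.θ e ⟨_, h⟩ else 1

/-- The value of the stacking function at a normal form `s` and a letter `a` that belongs to the
edge `f` and acts at the terminal vertex of `s`. If `s` ends in another edge, then `a` is rewritten
in the alphabet of that edge. If `s` ends in `f`, then the stacking function of the vertex group is
used, except when `s` ends in `f` with trivial group element and `a` is a letter of the edge
subgroup; in that case `a` is moved across `f`. -/
inductive PhiRel : D.Stack → (f : Option E) → L.A f → List L.Alpha → Prop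
  | chg (f r l f') (a : L.A f') (hf : f ≠ f') :
    PhiRel (⟨f, r⟩ :: l) f' a (L.emb f (L.cw f (D.tt f') (L.π f' a)))
  | same (f r l a) (h : ¬ (r = 1 ∧ a ∈ L.B f)) :
    PhiRel (⟨f, r⟩ :: l) f a (L.emb f ((L.st f).phi (L.w f r) a))
  | down (e f q l) (a : L.A (some e)) (h : a ∈ L.B (some e)) :
    PhiRel (⟨some e, 1⟩ :: ⟨f, q⟩ :: l) (some e) a
      (L.edgeWord (some (D.bar e)) ++ L.emb f (L.cw f (D.t (D.bar e)) (L.θ' e a)) ++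
        L.edgeWord (some e))

lemma exists_phiRel {s} (hs : Valid L.R s) (f) (a : L.A f) :
    ∃ u, L.PhiRel s f a u := by
  cases s with
  | nil => cases hs
  | cons x l =>
    obtain ⟨f', r⟩ := x
    by_cases hf : f' = f
    · subst hf
      by_cases h : r = 1 ∧ a ∈ L.B f'
      · obtain ⟨rfl, h⟩ := h
        cases hs with
        | base => exact absurd (Subgroup.mem_bot.1 (L.B_mem _ _ h)) ((L.stack none).gen.ne_one a)
        | cons e r f q l => exact ⟨_, PhiRel.down _ _ _ _ _ h⟩
      · exact ⟨_, PhiRel.same _ _ _ _ h⟩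
    · exact ⟨_, PhiRel.chg _ _ _ _ _ hf⟩

lemma wordVal_of_phiRel {s f a u} (h : L.PhiRel s f a u) (hs : Valid L.R s)
    (he : endv s = D.tt f) : wordVal L.eval u = D.ι (D.tt f) (L.π f a) := by
  cases h with
  | chg f' r l f a hf => rw [wordVal_emb, L.cw_spec _ he]
  | same f r l a h => rw [wordVal_emb, ((L.stack f).F1 _ (L.NTr_sub_N (L.w_mem f r)) a).1]
  | down e f q l a h =>
    have hm : L.π (some e) a ∈ D.H e := L.B_mem _ _ h
    have h1 : L.θ' e a = D.θ e ⟨_, hm⟩ := by simp [θ', hm]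
    rw [wordVal_append, wordVal_append, wordVal_edgeWord, wordVal_edgeWord, wordVal_emb,
      L.cw_spec _ hs.endv_cons_cons, h1]
    simp only [εε]
    rw [mul_assoc, ← D.rel, ← mul_assoc]
    have := D.ε_bar (D.bar e)
    rw [D.bar_bar] at this
    rw [this, one_mul]

lemma length_emb (f u) : (L.emb f u).length = u.length := by simp [emb]

lemma length_edgeWord (f) : (L.edgeWord f).length ≤ 1 := by
  cases f with
  | none => simp [edgeWord]
  | some e => by_cases h : e ∈ D.T <;> simp [edgeWord, h]

lemma exists_bound [Finite E] : ∃ K, ∀ s f a u, L.PhiRel s f a u → u.length ≤ K := by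
  have := L.fin
  obtain ⟨K1, h1⟩ := Finite.exists_le fun i : Option E × (Σ f, L.A f) =>
    (L.cw i.1 (D.tt i.2.1) (L.π i.2.1 i.2.2)).length
  obtain ⟨K2, h2⟩ := Finite.exists_le fun f => (L.st f).K
  obtain ⟨K3, h3⟩ := Finite.exists_le fun i : Option E × (Σ e, L.A (some e)) =>
    (L.cw i.1 (D.t (D.bar i.2.1)) (L.θ' i.2.1 i.2.2)).length
  refine ⟨K1 + K2 + K3 + 2, fun s f a u h => ?_⟩
  cases h with
  | chg f' r l f a hf =>
    have := h1 ⟨f', f, a⟩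
    simp only at this
    rw [length_emb]; omega
  | same f r l a h =>
    have := ((L.stack f).F1 _ (L.NTr_sub_N (L.w_mem f r)) a).2
    have := h2 f
    rw [length_emb]; omega
  | down e f q l a h =>
    have := h3 ⟨f, e, a⟩
    have h4 := L.length_edgeWord (some e)
    have h5 := L.length_edgeWord (some (D.bar e))
    simp only at this
    simp only [List.length_append, length_emb]; omega

open Classical in
/-- The stacking function. It is determined by `PhiRel` for the normal form that represents the same
group element as the given word and ends at the vertex of the given letter. -/
noncomputable def phi (y : List L.Alpha) : L.Alpha → List L.Alpha
  | .inr e => [.inr e]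
  | .inl ⟨f, a⟩ =>
    if y ++ [.inl ⟨f, a⟩] ∈ L.N ∨ ∃ y', y = y' ++ [L.invA (.inl ⟨f, a⟩)] then [.inl ⟨f, a⟩] else
    if h : ∃ u, ∃ s, Valid L.R s ∧ L.word s = y ∧ endv s = D.tt f ∧ L.PhiRel s f a u then h.choose
    else []

lemma phi_good {y a} (h : y ++ [a] ∈ L.N ∨ ∃ y', y = y' ++ [L.invA a]) : L.phi y a = [a] := by
  cases a with
  | inr e => rfl
  | inl x =>
    obtain ⟨f, a⟩ := x
    rw [phi, if_pos h]

lemma phi_bad {s f a} (hs : Valid L.R s) (he : endv s = D.tt f)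
    (h : ¬ (L.word s ++ [.inl ⟨f, a⟩] ∈ L.N ∨ ∃ y', L.word s = y' ++ [L.invA (.inl ⟨f, a⟩)])) :
    L.PhiRel s f a (L.phi (L.word s) (.inl ⟨f, a⟩)) := by
  have h1 : ∃ u, ∃ s', Valid L.R s' ∧ L.word s' = L.word s ∧ endv s' = D.tt f ∧
      L.PhiRel s' f a u := by
    obtain ⟨u, hu⟩ := L.exists_phiRel hs f a
    exact ⟨u, s, hs, rfl, he, hu⟩
  rw [phi, if_neg h, dif_pos h1]
  obtain ⟨s', hs', hw, he', hu⟩ := h1.choose_spec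
  have : s' = s := hs'.eq_of_val_eq hs (by rw [← L.wordVal_word hs', hw, L.wordVal_word hs])
    (he'.trans he.symm)
  rwa [this] at hu

/-- The stackable structure of the fundamental group, with `K` a bound for the lengths of the values
of the stacking function. -/
noncomputable def stk (K : ℕ) : StackingData L.Alpha where
  N := L.N
  K := K
  phi := L.phi

/-- Every word of `N` is represented by a normal form with any given terminal vertex. -/
lemma exists_valid_word {y} (hy : y ∈ L.N) (v : V) :
    ∃ s, Valid L.R s ∧ endv s = v ∧ L.word s = y := by
  obtain ⟨s, hs, rfl⟩ := hy
  exact ⟨tau v s, hs.tau v, hs.endv_tau v, L.word_tau v s⟩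

/-- An edge letter either extends a normal form or cancels its last letter. -/
lemma edge_good {y} (hy : y ∈ L.N) (e) :
    y ++ [.inr e] ∈ L.N ∨ ∃ y', y = y' ++ [L.invA (.inr e)] := by
  obtain ⟨s, hs, he, rfl⟩ := L.exists_valid_word hy (D.t (D.bar e))
  obtain ⟨f, q, l, rfl, h1, h2, h3⟩ | ⟨l, rfl, h2, h4, -, h3⟩ := hs.step_cases he
  · left
    refine ⟨_, h3, ?_⟩
    rw [word, L.w_of_mem (one_mem _)]
    simp [edgeWord, e.2, emb]
  · right
    refine ⟨L.word l, ?_⟩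
    have : D.bar e ∉ D.T := fun h => e.2 (by have := D.bar_mem _ h; rwa [D.bar_bar] at this)
    rw [word, L.w_of_mem (one_mem _)]
    simp [edgeWord, emb, this, invA]

lemma acc_edge {K : ℕ} {y} (hy : y ∈ L.N) (e) :
    Acc (StackStep L.eval L.invA (L.stk K)) (y, .inr e) := by
  refine Acc.intro _ fun q hq => ?_
  obtain ⟨-, h1, h2, -⟩ := hq
  exact ((L.edge_good hy e).elim h1 h2).elim

/-- If a letter `a` of the last edge `f` of a normal form neither extends nor cancels the word of that
normal form, then `a` neither extends nor cancels any normal form `z` of the vertex group in the coset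
that is recorded at the end. -/
lemma bad_vertex {f r l z a} (hs : Valid L.R (⟨f, r⟩ :: l)) (hz : z ∈ (L.st f).N)
    (hzr : L.R.rep f (wordVal (L.π f) z) = r) (hB : ¬ (r = 1 ∧ a ∈ L.B f))
    (h1 : L.word (⟨f, r⟩ :: l) ++ [.inl ⟨f, a⟩] ∉ L.N)
    (h2 : ¬ ∃ y', L.word (⟨f, r⟩ :: l) = y' ++ [L.invA (.inl ⟨f, a⟩)]) :
    z ++ [a] ∉ (L.st f).N ∧ ¬ ∃ y', z = y' ++ [L.inv f a] := by
  have hz' := hz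
  rw [L.N_eq] at hz'
  obtain ⟨u, hu, v, hv, rfl⟩ := hz'
  have hmem : ∀ u ∈ L.NH f, wordVal (L.π f) u ∈ D.HH f := fun u hu =>
    wordVal_mem _ _ _ fun b hb => L.B_mem f b (L.NH_sub f u hu b hb)
  have hwv : L.w f r = v := by
    rw [← hzr, w_rep, wordVal_append, L.w_mul (hmem u hu), L.w_wordVal hv]
  have hr1 : v = [] → r = 1 := by
    rintro rfl
    rw [← hs.rep_head, R_rep, hwv, wordVal_nil]
  have hword : L.word (⟨f, r⟩ :: l) = L.word l ++ L.edgeWord f ++ L.emb f v := by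
    rw [word, hwv]
  constructor
  · intro hza
    rw [L.N_eq] at hza
    obtain ⟨u', hu', v', hv', h⟩ := hza
    obtain rfl | ⟨v'', b, rfl⟩ := v'.eq_nil_or_concat
    · rw [List.append_nil] at h
      have hall : ∀ b ∈ u ++ v ++ [a], b ∈ L.B f := by
        rw [h]; exact L.NH_sub f u' hu'
      have hv1 : wordVal (L.π f) v ∈ D.HH f :=
        wordVal_mem _ _ _ fun b hb => L.B_mem f b (hall b (by simp [hb]))
      refine hB ⟨hr1 ?_, hall a (by simp)⟩
      rw [← L.w_wordVal hv, L.w_of_mem hv1]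
    · rw [List.concat_eq_append, ← List.append_assoc] at h
      obtain ⟨h3, h4⟩ := List.append_inj' h rfl
      obtain rfl : a = b := by simpa using h4
      rw [List.concat_eq_append] at hv'
      have hv'' : v'' ∈ L.NTr f := L.NTr_prefix f _ hv' _ (List.prefix_append _ _)
      obtain rfl : v = v'' := by
        have h5 := L.w_mul (x := wordVal (L.π f) v) (hmem u hu)
        rw [← wordVal_append, h3, wordVal_append, L.w_mul (hmem u' hu'), L.w_wordVal hv,
          L.w_wordVal hv''] at h5
        exact h5.symm
      apply h1
      refine ⟨_, (L.valid_replace hs hv').1, ?_⟩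
      rw [(L.valid_replace hs hv').2, hword]
      simp [emb]
  · rintro ⟨y', h⟩
    obtain rfl | ⟨v'', b, rfl⟩ := v.eq_nil_or_concat
    · rw [List.append_nil] at h
      have h3 : L.inv f a ∈ L.B f := L.NH_sub f u hu _ (by rw [h]; simp)
      have h4 := L.B_inv f _ h3
      rw [(L.stack f).gen.inv_invol] at h4
      exact hB ⟨hr1 rfl, h4⟩
    · rw [List.concat_eq_append, ← List.append_assoc] at h
      obtain ⟨-, h4⟩ := List.append_inj' h rfl
      obtain rfl : b = L.inv f a := by simpa using h4
      apply h2
      refine ⟨L.word l ++ L.edgeWord f ++ L.emb f v'', ?_⟩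
      rw [hword]
      simp [emb, invA]

/-- The normal form reached from `s` by a word in the letters of its last edge. -/
lemma eq_word_act {f r l y} (hs : Valid L.R (⟨f, r⟩ :: l)) (hy : y ∈ L.N) (u : List (L.A f))
    (h : wordVal L.eval y = wordVal L.eval (L.word (⟨f, r⟩ :: l) ++ L.emb f u)) :
    y = L.word (act L.R (⟨f, r⟩ :: l) (Pi.mulSingle (D.tt f) (wordVal (L.π f) u))) := by
  apply L.eq_word_of_wordVal_eq hy (hs.act _)
  rw [h, wordVal_append, L.wordVal_word hs, wordVal_emb, hs.val_act]
  simp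

lemma emb_eq_append {f : Option E} {M : List (L.A f)} {u u' : List L.Alpha} {c : L.Alpha}
    (h : L.emb f M = u ++ c :: u') :
    ∃ M₁ b M₂, u = L.emb f M₁ ∧ c = .inl ⟨f, b⟩ ∧ M = M₁ ++ b :: M₂ := by
  obtain ⟨M₁, M', rfl, h1, h2⟩ := List.map_eq_append_iff.1 h
  obtain ⟨b, M₂, rfl, h3, -⟩ := List.map_eq_cons_iff.1 h2
  exact ⟨M₁, b, M₂, h1.symm, h3.symm, rfl⟩

/-- Termination for letters of the last edge of a normal form: the argument is by induction over
the stacking of the vertex group, where `z` is a normal form of some element of the coset that is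
recorded by the normal form, and by induction on the number of edges for the letters that are moved
across the last edge. -/
lemma acc_same {K : ℕ} (n : ℕ)
    (ih : ∀ s, s.length < n → Valid L.R s → ∀ f a, endv s = D.tt f →
      Acc (StackStep L.eval L.invA (L.stk K)) (L.word s, .inl ⟨f, a⟩))
    (f : Option E) (p : List (L.A f) × L.A f) : p.1 ∈ (L.st f).N → ∀ r l, l.length < n →
      Valid L.R (⟨f, r⟩ :: l) → L.R.rep f (wordVal (L.π f) p.1) = r →
      Acc (StackStep L.eval L.invA (L.stk K)) (L.word (⟨f, r⟩ :: l), .inl ⟨f, p.2⟩) := by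
  induction p using (L.stack f).wf.induction with
  | h p ihp =>
    obtain ⟨z, a⟩ := p
    intro hz r l hl hs hzr
    simp only at hz hzr
    refine Acc.intro _ ?_
    rintro ⟨y, c⟩ ⟨-, h1, h2, u, u', h3, hy, h4⟩
    simp only [stk] at h1 h2 h3 hy h4
    have h5 := L.phi_bad hs rfl (a := a) (not_or.2 ⟨h1, h2⟩)
    rw [h3] at h5
    clear h3
    generalize hU : u ++ c :: u' = U at h5
    cases h5 with
    | chg _ _ _ _ _ hf => exact absurd rfl hf
    | same _ _ _ _ hB =>
      obtain ⟨M₁, b, M₂, rfl, rfl, h6⟩ := L.emb_eq_append hU.symm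
      rw [L.eq_word_act hs hy _ h4]
      obtain ⟨z', ⟨hz', hzv⟩, -⟩ := (L.stack f).nf (wordVal (L.π f) z * wordVal (L.π f) M₁)
      obtain ⟨h7, h8⟩ := L.bad_vertex hs hz hzr hB h1 h2
      have hs' := hs.act (Pi.mulSingle (D.tt f) (wordVal (L.π f) M₁))
      rw [act] at hs' ⊢
      refine ihp (z', b) ⟨hz, h7, h8, M₁, M₂, ?_, hz', ?_⟩ hz' _ _ (by simpa using hl) hs' ?_
      · -- Translation invariance turns the rewriting at `w f r` into the rewriting at `z`.
        have hzr' : wordVal (L.π f) (L.w f r) = r := hs.rep_head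
        have h9 : L.R.rep f (wordVal (L.π f) z) = wordVal (L.π f) (L.w f r) := hzr.trans hzr'.symm
        rw [← h6]
        refine L.transl f a _ (L.NTr_sub_N (L.w_mem f r)) _ hz ?_ ?_
        · rw [hzr']
          rintro ⟨h10, h11⟩
          refine hB ⟨?_, h11⟩
          rw [← hs.rep_head]
          exact L.R.rep_eq_one h10
        · refine ⟨_, L.R.rep_mem f (wordVal (L.π f) z), ?_⟩
          rw [h9]; simp
      · rw [hzv, wordVal_append]
      · simp only
        rw [hzv, Pi.mulSingle_eq_same, ← hzr, L.R.rep_mul_rep]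
    | down e f' q l' _ hB =>
      cases c with
      | inr e' => exact L.acc_edge hy e'
      | inl x =>
        have hne : ∀ f, (.inl x : L.Alpha) ∉ L.edgeWord f := by
          intro f
          cases f with
          | none => simp [edgeWord]
          | some e => by_cases h : e ∈ D.T <;> simp [edgeWord, h]
        obtain ⟨u₁, u₂, rfl, h6⟩ := List.split_middle (hne _) (hne _) hU.symm
        obtain ⟨M₁, b, M₂, rfl, h7, -⟩ := L.emb_eq_append h6
        rw [h7]
        cases hs with
        | cons _ _ _ _ _ hr ht hred hvl =>
          -- The step back along `bar e` cancels `e`, so a path with fewer edges is reached.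
          have h8 : y = L.word (act L.R (⟨f', q⟩ :: l')
              (Pi.mulSingle (D.tt f') (wordVal (L.π f') M₁))) := by
            apply L.eq_word_act hvl hy
            have hs : Valid L.R (⟨some e, 1⟩ :: ⟨f', q⟩ :: l') := Valid.cons _ _ _ _ _ hr ht hred hvl
            have h9 := D.ε_bar e
            rw [h4, wordVal_append, L.wordVal_word hs, wordVal_append, wordVal_edgeWord,
              wordVal_append, L.wordVal_word hvl, val]
            simp only [map_one, mul_one, εε]
            rw [mul_assoc (val _), ← mul_assoc (D.ε e), h9, one_mul]
          rw [h8]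
          exact ih _ (by simpa using hl) (hvl.act _) _ _ (by simp)

/-- Termination for all letters, by induction on the number of edges of the normal form. A letter
that does not belong to the last edge is rewritten in the letters of that edge. -/
lemma acc_vertex {K : ℕ} (n : ℕ) : ∀ s, s.length < n → Valid L.R s → ∀ f a, endv s = D.tt f →
    Acc (StackStep L.eval L.invA (L.stk K)) (L.word s, .inl ⟨f, a⟩) := by
  induction n with
  | zero => intro s hs; simp at hs
  | succ n ih =>
    intro s hn hs f a he
    cases s with
    | nil => cases hs
    | cons x l =>
      obtain ⟨f', r⟩ := x
      have hl : l.length < n := by simpa using hn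
      have key : ∀ r l, l.length < n → Valid L.R (⟨f', r⟩ :: l) → ∀ b,
          Acc (StackStep L.eval L.invA (L.stk K)) (L.word (⟨f', r⟩ :: l), .inl ⟨f', b⟩) := by
        intro r l hl hs b
        obtain ⟨z, ⟨hz, hzv⟩, -⟩ := (L.stack f').nf r
        exact L.acc_same n ih f' (z, b) hz r l hl hs (by simp only [hzv, hs.rep_head])
      by_cases hf : f' = f
      · subst hf
        exact key r l hl hs a
      · refine Acc.intro _ ?_
        rintro ⟨y, c⟩ ⟨-, h1, h2, u, u', h3, hy, h4⟩
        simp only [stk] at h1 h2 h3 hy h4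
        have h5 := L.phi_bad hs he (a := a) (not_or.2 ⟨h1, h2⟩)
        rw [h3] at h5
        clear h3
        generalize hU : u ++ c :: u' = U at h5
        cases h5 with
        | same _ _ _ _ hB => exact absurd rfl hf
        | down => exact absurd rfl hf
        | chg =>
          obtain ⟨M₁, b, M₂, rfl, rfl, h6⟩ := L.emb_eq_append hU.symm
          rw [L.eq_word_act hs hy _ h4]
          have hs' := hs.act (Pi.mulSingle (D.tt f') (wordVal (L.π f') M₁))
          rw [act] at hs' ⊢
          exact key _ _ (by simpa using hl) hs' b

lemma isInvGenSet : IsInvGenSet G L.eval L.invA where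
  ne_one := by
    rintro (⟨f, a⟩ | e) h
    · exact (L.stack f).gen.ne_one a (ι_injective L.R _ _ h)
    · -- If `ε e` were trivial, then appending or cancelling `e` would not change the word.
      obtain ⟨s, hs, he, -⟩ := exists_valid L.R 1 (D.t (D.bar e))
      have hv := hs.val_step he
      have h' : D.ε e = 1 := h
      rw [h', mul_one] at hv
      have hw := congrArg List.length (L.word_eq_of_val_eq (hs.step he) hs hv)
      have hb : D.bar e ∉ D.T := fun h => e.2 (by have := D.bar_mem _ h; rwa [D.bar_bar] at this)
      obtain ⟨f, q, l, rfl, h1, h2, h3⟩ | ⟨l, rfl, h2, h4, -, h3⟩ := hs.step_cases he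
      · rw [h2, word] at hw
        simp [edgeWord, e.2] at hw
      · rw [h2, word] at hw
        simp [edgeWord, hb] at hw
  inv_invol := by
    rintro (⟨f, a⟩ | e)
    · simp [invA, (L.stack f).gen.inv_invol]
    · simp [invA, D.bar_bar]
  val_inv := by
    rintro (⟨f, a⟩ | e)
    · simp [invA, eval, (L.stack f).gen.val_inv]
    · simp only [invA, eval]
      exact eq_inv_of_mul_eq_one_right (D.ε_bar e)
  gen := by
    rw [eq_top_iff]
    intro g _
    obtain ⟨y, ⟨-, rfl⟩, -⟩ := L.nf_unique g
    exact wordVal_mem _ _ _ fun a _ => Subgroup.subset_closure ⟨a, rfl⟩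

/-- The fundamental group is stackable. -/
lemma stackable [Finite E] (L : D.Letters) : Stackable G := by
  classical
  have := L.fin
  obtain ⟨K, hK⟩ := L.exists_bound
  refine ⟨L.Alpha, Fintype.ofFinite _, L.eval, L.invA, L.stk (K + 1), ?_⟩
  refine ⟨L.isInvGenSet, L.nf_unique, L.prefixClosed_N, ?_, ?_, ?_⟩
  · intro y hy a
    by_cases hg : y ++ [a] ∈ L.N ∨ ∃ y', y = y' ++ [L.invA a]
    · have : (L.stk (K + 1)).phi y a = [a] := L.phi_good hg
      rw [this, wordVal_singleton]
      simp [stk]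
    · cases a with
      | inr e => exact absurd (L.edge_good hy e) hg
      | inl x =>
        obtain ⟨f, a⟩ := x
        obtain ⟨s, hs, he, rfl⟩ := L.exists_valid_word hy (D.tt f)
        have := L.phi_bad hs he hg
        exact ⟨L.wordVal_of_phiRel this hs he, (hK _ _ _ _ this).trans (Nat.le_succ K)⟩
  · intro y _ a h
    exact L.phi_good h
  · refine StackStep.not_exists_chain ?_
    rintro ⟨y, a | e⟩ hy
    · obtain ⟨f, a⟩ := a
      obtain ⟨s, hs, he, rfl⟩ := L.exists_valid_word hy (D.tt f)
      exact L.acc_vertex _ s (Nat.lt_succ_self _) hs f a he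
    · exact L.acc_edge hy e

end Letters

end GraphData

/-! ### The fundamental group of a graph of groups -/

lemma cast_mul_of_heq {A B : Type} [gA : Group A] [gB : Group B] (h : A = B) (hg : HEq gA gB)
    (a b : A) : cast h (a * b) = cast h a * cast h b := by
  subst h
  cases hg
  rfl

/-- A stackable group is stackable respecting the trivial subgroup, with `B` empty. -/
lemma StackableRespecting.bot {G : Type} [Group G] {H : Subgroup G}
    (h : StackableRespecting G H) : StackableRespecting G ⊥ := by
  obtain ⟨α, hα, π, inv, st, hst, -⟩ := h
  refine ⟨α, hα, π, inv, st, hst, ∅, by simp, by simp, by simp, {[]}, st.N, ?_, ?_, ?_,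
    hst.prefixClosed, ?_, ?_, ?_, ?_⟩
  · rintro _ rfl b hb
    simp at hb
  · rintro _ rfl p hp
    exact List.prefix_nil.1 hp
  · intro h hh
    rw [Subgroup.mem_bot] at hh
    exact ⟨[], ⟨rfl, by rw [hh, wordVal_nil]⟩, fun y hy => hy.1⟩
  · intro g
    simpa [Subgroup.mem_bot, mul_inv_eq_one] using hst.nf g
  · ext w
    simp
  · simp
  · rintro a y hy y' hy' - ⟨h, hh, h'⟩
    rw [Subgroup.mem_bot] at hh
    rw [hh, one_mul] at h'
    rw [(hst.nf _).unique ⟨hy', rfl⟩ ⟨hy, h'.symm⟩]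

/-- Stackable structures that respect the edge subgroups yield one for the fundamental group. -/
lemma GraphData.stackable {V E : Type} [Finite E] {Gv : V → Type} [∀ v, Group (Gv v)]
    [DecidableEq V] {G : Type} [Group G] (D : GraphData V E Gv G)
    (h : ∀ f, StackableRespecting (Gv (D.tt f)) (D.HH f)) : Stackable G := by
  choose A hA π inv st hst B hB1 hB2 hB3 NH NTr h1 h2 h3 h4 h5 h6 h7 h8 using h
  exact GraphData.Letters.stackable (D := D)
    { A := A, fin := fun f => @Finite.of_fintype _ (hA f), π := π, inv := inv, st := st
      stack := hst, B := B, B_inv := hB1, B_mem := hB2, NH := NH, NTr := NTr, NH_sub := h1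
      NTr_prefix := h4, NTr_rep := h5, N_eq := h6, transl := h8 }

section GraphOfGroupsFundamental

variable {V E : Type} (bar : E → E) (t : E → V)
  (Gv : V → Type) [instGv : ∀ v, Group (Gv v)]
  (Ge : E → Type) [instGe : ∀ e, Group (Ge e)]
  (T : Set E) (η : ∀ e, Ge e →* Gv (t e)) (hGe : ∀ e, Ge (bar e) = Ge e)

/-- The projection onto the fundamental group. -/
def gogMk : GoGBase Gv T →* GoGFund bar t Gv Ge T η hGe :=
  QuotientGroup.mk' (Subgroup.normalClosure (gogRels bar t Gv Ge T η hGe))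

open Classical in
/-- The image of an edge in the fundamental group, which is trivial on the spanning tree. -/
noncomputable def gogEdge (e : E) : GoGFund bar t Gv Ge T η hGe :=
  if h : e ∈ T then 1 else gogMk bar t Gv Ge T η hGe (gogEin Gv T ⟨e, h⟩)

variable {bar t Gv Ge T η hGe}

lemma gogMk_eq_one {x} (h : x ∈ gogRels bar t Gv Ge T η hGe) :
    gogMk bar t Gv Ge T η hGe x = 1 :=
  (QuotientGroup.eq_one_iff x).2 (Subgroup.subset_normalClosure h)

lemma gogEdge_of_mem {e : E} (h : e ∈ T) : gogEdge bar t Gv Ge T η hGe e = 1 := by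
  simp [gogEdge, h]

lemma gogEdge_of_notMem {e : E} (h : e ∉ T) :
    gogEdge bar t Gv Ge T η hGe e = gogMk bar t Gv Ge T η hGe (gogEin Gv T ⟨e, h⟩) := by
  simp [gogEdge, h]

lemma gogEdge_bar_mul (hbar : ∀ e, bar (bar e) = e) (hT : ∀ e ∈ T, bar e ∈ T) (e : E) :
    gogEdge bar t Gv Ge T η hGe (bar e) * gogEdge bar t Gv Ge T η hGe e = 1 := by
  by_cases h : e ∈ T
  · rw [gogEdge_of_mem h, gogEdge_of_mem (hT e h), one_mul]
  · have hb : bar e ∉ T := fun hb => h (hbar e ▸ hT _ hb)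
    rw [gogEdge_of_notMem h, gogEdge_of_notMem hb, ← map_mul]
    exact gogMk_eq_one (Or.inl (Or.inl ⟨e, h, hb, rfl⟩))

lemma gogEdge_rel (e : E) (g : Ge e) :
    gogEdge bar t Gv Ge T η hGe e * gogMk bar t Gv Ge T η hGe (gogVin Gv T (t e) (η e g)) =
      gogMk bar t Gv Ge T η hGe (gogVin Gv T (t (bar e)) (η (bar e) (cast (hGe e).symm g))) *
        gogEdge bar t Gv Ge T η hGe e := by
  by_cases h : e ∈ T
  · rw [gogEdge_of_mem h, one_mul, mul_one, ← mul_inv_eq_one, ← map_inv, ← map_mul]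
    exact gogMk_eq_one (Or.inl (Or.inr ⟨e, h, g, rfl⟩))
  · rw [gogEdge_of_notMem h, ← mul_inv_eq_iff_eq_mul, ← mul_inv_eq_one, ← map_mul, ← map_inv,
      ← map_mul, ← map_inv, ← map_mul]
    exact gogMk_eq_one (Or.inr ⟨e, h, g, rfl⟩)

lemma gog_gen (K : Subgroup (GoGFund bar t Gv Ge T η hGe))
    (hv : ∀ v g, gogMk bar t Gv Ge T η hGe (gogVin Gv T v g) ∈ K)
    (he : ∀ e, gogEdge bar t Gv Ge T η hGe e ∈ K) (g) : g ∈ K := by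
  obtain ⟨x, rfl⟩ : ∃ x, gogMk bar t Gv Ge T η hGe x = g := QuotientGroup.mk'_surjective _ g
  induction x using Monoid.Coprod.induction_on with
  | inl m =>
    induction m using Monoid.CoprodI.induction_on with
    | one =>
      rw [map_one]
      exact (map_one (gogMk bar t Gv Ge T η hGe)).symm ▸ one_mem K
    | of v g => exact hv v g
    | mul x y hx hy =>
      rw [map_mul]
      exact (map_mul (gogMk bar t Gv Ge T η hGe) _ _).symm ▸ mul_mem hx hy
  | inr n =>
    induction n using FreeGroup.induction_on with
    | C1 =>
      rw [map_one]
      exact (map_one (gogMk bar t Gv Ge T η hGe)).symm ▸ one_mem K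
    | of e =>
      have h := he e
      rwa [gogEdge_of_notMem e.2] at h
    | inv_of e h =>
      rw [map_inv]
      exact (map_inv (gogMk bar t Gv Ge T η hGe) _).symm ▸ inv_mem h
    | mul x y hx hy =>
      rw [map_mul]
      exact (map_mul (gogMk bar t Gv Ge T η hGe) _ _).symm ▸ mul_mem hx hy
  | mul x y hx hy => exact (map_mul (gogMk bar t Gv Ge T η hGe) x y).symm ▸ mul_mem hx hy

/-- The universal property of the fundamental group. -/
lemma exists_gogLift {P : Type} [Group P] (φ : ∀ v, Gv v →* P) (ψ : E → P)
    (hbar : ∀ e, ψ (bar e) * ψ e = 1) (hT : ∀ e ∈ T, ψ e = 1)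
    (hrel : ∀ e g, ψ e * φ (t e) (η e g) =
      φ (t (bar e)) (η (bar e) (cast (hGe e).symm g)) * ψ e) :
    ∃ Φ : GoGFund bar t Gv Ge T η hGe →* P,
      (∀ v g, Φ (gogMk bar t Gv Ge T η hGe (gogVin Gv T v g)) = φ v g) ∧
      ∀ e, Φ (gogEdge bar t Gv Ge T η hGe e) = ψ e := by
  let Φ' : GoGBase Gv T →* P :=
    Monoid.Coprod.lift (Monoid.CoprodI.lift φ) (FreeGroup.lift fun e => ψ e)
  have h1 : ∀ v g, Φ' (gogVin Gv T v g) = φ v g := fun v g =>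
    (Monoid.Coprod.lift_apply_inl _ _ _).trans (Monoid.CoprodI.lift_of _ _)
  have h2 : ∀ e, Φ' (gogEin Gv T e) = ψ e := fun e =>
    (Monoid.Coprod.lift_apply_inr _ _ _).trans FreeGroup.lift_apply_of
  have hker : Subgroup.normalClosure (gogRels bar t Gv Ge T η hGe) ≤ Φ'.ker := by
    refine Subgroup.normalClosure_le_normal ?_
    rintro x ((⟨e, he, hbe, rfl⟩ | ⟨e, he, g, rfl⟩) | ⟨e, he, g, rfl⟩)
    · rw [SetLike.mem_coe, MonoidHom.mem_ker, map_mul, h2, h2, hbar]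
    · rw [SetLike.mem_coe, MonoidHom.mem_ker, map_mul, map_inv, h1, h1, mul_inv_eq_one]
      simpa [hT e he] using hrel e g
    · rw [SetLike.mem_coe, MonoidHom.mem_ker, map_mul, map_mul, map_mul, map_inv, map_inv, h1, h1,
        h2, mul_inv_eq_one, mul_inv_eq_iff_eq_mul, hrel]
  refine ⟨QuotientGroup.lift _ Φ' hker, fun v g => h1 v g, fun e => ?_⟩
  by_cases h : e ∈ T
  · rw [gogEdge_of_mem h, hT e h]
    exact map_one _
  · rw [gogEdge_of_notMem h]
    exact h2 ⟨e, h⟩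

/-- Right actions of the fundamental group can be prescribed on the generators. -/
lemma exists_gogAction (hbar : ∀ e, bar (bar e) = e) (X : Type) (av : ∀ v, Gv v → X → X)
    (ae : E → X → X) (h1 : ∀ v x, av v 1 x = x)
    (h2 : ∀ v g h x, av v (g * h) x = av v h (av v g x))
    (h3 : ∀ e x, ae (bar e) (ae e x) = x) (h4 : ∀ e ∈ T, ∀ x, ae e x = x)
    (h5 : ∀ e g x, av (t e) (η e g) (ae e x) =
      ae e (av (t (bar e)) (η (bar e) (cast (hGe e).symm g)) x)) :
    ∃ A : GoGFund bar t Gv Ge T η hGe → X → X,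
      (∀ x, A 1 x = x) ∧ (∀ g h x, A (g * h) x = A h (A g x)) ∧
      (∀ v g x, A (gogMk bar t Gv Ge T η hGe (gogVin Gv T v g)) x = av v g x) ∧
      ∀ e x, A (gogEdge bar t Gv Ge T η hGe e) x = ae e x := by
  -- Right actions are homomorphisms into the opposite of the symmetric group.
  let pv : ∀ v, Gv v → Equiv.Perm X := fun v g =>
    ⟨av v g, av v g⁻¹, fun x => by rw [← h2, mul_inv_cancel, h1],
      fun x => by rw [← h2, inv_mul_cancel, h1]⟩
  let pe : E → Equiv.Perm X := fun e =>
    ⟨ae e, ae (bar e), h3 e, fun x => by simpa [hbar] using h3 (bar e) x⟩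
  let φ : ∀ v, Gv v →* (Equiv.Perm X)ᵐᵒᵖ := fun v =>
    { toFun := fun g => MulOpposite.op (pv v g)
      map_one' := congrArg MulOpposite.op (Equiv.ext (h1 v))
      map_mul' := fun g h => congrArg MulOpposite.op (Equiv.ext (h2 v g h)) }
  obtain ⟨Φ, hΦ1, hΦ2⟩ := exists_gogLift (bar := bar) (t := t) (T := T) (η := η) (hGe := hGe) φ
    (fun e => MulOpposite.op (pe e))
    (fun e => congrArg MulOpposite.op (Equiv.ext fun x => (pe e).right_inv x))
    (fun e he => congrArg MulOpposite.op (Equiv.ext (h4 e he)))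
    (fun e g => congrArg MulOpposite.op (Equiv.ext (h5 e g)))
  refine ⟨fun g => (Φ g).unop, fun x => ?_, fun g h x => ?_, fun v g x => ?_, fun e x => ?_⟩
  · exact congrArg (fun p => p.unop x) (map_one Φ)
  · exact congrArg (fun p => p.unop x) (map_mul Φ g h)
  · exact congrArg (fun p => p.unop x) (hΦ1 v g)
  · exact congrArg (fun p => p.unop x) (hΦ2 e)

/-- Equal edges give equal images; the product of all vertex groups is a type that does not depend
on the edge. -/
lemma mulSingle_eta_congr [DecidableEq V] {e e' : E} (h : e' = e) {g : Ge e} {g' : Ge e'}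
    (hg : HEq g' g) :
    (Pi.mulSingle (t e') (η e' g') : ∀ v, Gv v) = Pi.mulSingle (t e) (η e g) := by
  subst h
  rw [eq_of_heq hg]

end GraphOfGroupsFundamental

/-- **Theorem (Brittenham–Hermiller–Susse).** Let `𝒢` be a finite graph of groups over a
finite connected graph `Λ` with at least one edge, in which every edge group is finitely
generated.  If for every directed edge `e` of `Λ` the vertex group `G_{t(e)}` is
stackable respecting the subgroup `η_e(G_e)`, then the fundamental group `π₁(𝒢)`
is stackable. -/
theorem graph_of_groups_stackable
    {V E : Type} [Fintype V] [Fintype E]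
    (bar : E → E) (t : E → V)
    (Gv : V → Type) [instGv : ∀ v, Group (Gv v)]
    (Ge : E → Type) [instGe : ∀ e, Group (Ge e)]
    (T : Set E)
    (η : ∀ e, Ge e →* Gv (t e)) (hGe : ∀ e, Ge (bar e) = Ge e)
    (hbar : ∀ e, bar (bar e) = e) (hbarne : ∀ e, bar e ≠ e)
    (hGrpBar : ∀ e, HEq (instGe (bar e)) (instGe e))
    (hηinj : ∀ e, Function.Injective (η e))
    (hE : Nonempty E)
    (hconn : ∀ u v : V, ∃ p : List E, IsEdgePath (fun e => t (bar e)) t u p v)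
    (hTbar : ∀ e ∈ T, bar e ∈ T)
    (hTtree : ∀ u v : V, ∃! p : List E, (∀ e ∈ p, e ∈ T) ∧
      IsEdgePath (fun e => t (bar e)) t u p v ∧ List.Chain' (fun e f => f ≠ bar e) p)
    (hEfg : ∀ e, Group.FG (Ge e))
    (hvert : ∀ e : E, StackableRespecting (Gv (t e)) (η e).range) :
    Stackable (GoGFund bar t Gv Ge T η hGe) := by
  classical
  have e0 : E := Classical.arbitrary E
  -- The identification of the groups of the two orientations of an edge.
  let c : ∀ e, Ge e →* Ge (bar e) := fun e => MonoidHom.mk' (cast (hGe e).symm)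
    (cast_mul_of_heq (hGe e).symm (hGrpBar e).symm)
  let θ : ∀ e, (η e).range →* Gv (t (bar e)) := fun e =>
    (η (bar e)).comp ((c e).comp (MonoidHom.ofInjective (hηinj e)).symm.toMonoidHom)
  have hθ : ∀ e g, θ e ⟨η e g, ⟨g, rfl⟩⟩ = η (bar e) (cast (hGe e).symm g) := by
    intro e g
    have : (⟨η e g, ⟨g, rfl⟩⟩ : (η e).range) = MonoidHom.ofInjective (hηinj e) g := rfl
    change η (bar e) (cast _ ((MonoidHom.ofInjective (hηinj e)).symm _)) = _
    rw [this, MulEquiv.symm_apply_apply]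
  let D : GraphData V E Gv (GoGFund bar t Gv Ge T η hGe) :=
    { bar := bar
      t := t
      T := T
      v0 := t e0
      bar_bar := hbar
      bar_mem := hTbar
      tree := hTtree
      H := fun e => (η e).range
      θ := θ
      θ_mem := fun e h => ⟨_, rfl⟩
      θ_inv := by
        rintro e ⟨_, g, rfl⟩
        have h : (⟨_, ⟨_, rfl⟩⟩ : (η (bar e)).range) =
            ⟨η (bar e) (cast (hGe e).symm g), ⟨_, rfl⟩⟩ := Subtype.ext (hθ e g)
        exact (congrArg (Pi.mulSingle _) ((congrArg (θ (bar e)) h).trans (hθ _ _))).trans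
          (mulSingle_eta_congr (hbar e) ((cast_heq _ _).trans (cast_heq _ _)))
      ι := fun v => (gogMk bar t Gv Ge T η hGe).comp (gogVin Gv T v)
      ε := gogEdge bar t Gv Ge T η hGe
      ε_bar := fun e => by simpa [hbar] using gogEdge_bar_mul hbar hTbar (bar e)
      ε_tree := fun e he => gogEdge_of_mem he
      rel := by
        rintro e ⟨_, g, rfl⟩
        rw [hθ]
        exact gogEdge_rel e g
      gen := gog_gen
      lift := fun X av ae h1 h2 h3 h4 h5 =>
        exists_gogAction hbar X av ae h1 h2 h3 h4 fun e g x => by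
          rw [← hθ]
          exact h5 e ⟨η e g, ⟨g, rfl⟩⟩ x }
  refine D.stackable fun f => ?_
  cases f with
  | none => exact (hvert e0).bot
  | some e => exact hvert e
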